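/- arXiv:1604.08277 — 2 statements merged into one kernel-verified Lean document; each statement's English description precedes it below -/
import Mathlib

section
/- For a finite Coxeter group W of rank n = |S|, the Coxeter complex X_W (the order complex of the poset of cosets wW_T with T ⊊ S, ordered by reverse inclusion) is a simplicial complex homeomorphic to the (n-1)-dimensional sphere. -/
open Pointwise CategoryTheory

/-- The standard parabolic subgroup `W_T` generated by the simple reflections in `T ⊆ S`. -/
def CoxeterSystem.parabolic {B W : Type*} [Group W] {M : CoxeterMatrix B}
    (cs : CoxeterSystem M W) (T : Set B) : Subgroup W :=
  Subgroup.closure (cs.simple '' T)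

/-- The faces of the Coxeter complex: the cosets `w W_T` with `T ⊊ S`. -/
def CoxeterSystem.CosetFace {B W : Type} [Group W] {M : CoxeterMatrix B}
    (cs : CoxeterSystem M W) : Type :=
  {X : Set W // ∃ (w : W) (T : Set B), T ≠ Set.univ ∧ X = w • (cs.parabolic T : Set W)}

/-- The face order on cosets: `w W_T ≤ w' W_{T'}` iff `w W_T ⊇ w' W_{T'}`
(order by reverse inclusion). -/
instance {B W : Type} [Group W] {M : CoxeterMatrix B} (cs : CoxeterSystem M W) :
    PartialOrder cs.CosetFace where
  le X Y := Y.1 ⊆ X.1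
  le_refl X := subset_rfl
  le_trans X Y Z h h' := Set.Subset.trans h' h
  le_antisymm X Y h h' := Subtype.ext (Set.Subset.antisymm h' h)

/-- The geometric realization of the Coxeter complex of a Coxeter system, realized as the
geometric realization of the nerve of its poset of cosets (i.e. of the order complex of the
face poset, which is homeomorphic to the Coxeter complex itself). -/
noncomputable def CoxeterSystem.coxeterComplex {B W : Type} [Group W] {M : CoxeterMatrix B}
    (cs : CoxeterSystem M W) : TopCat :=
  SSet.toTop.obj (nerveFunctor.obj (Cat.of cs.CosetFace))

/-!
The contragredient `V*` of Tits' geometric representation carries the complete simplicial fan of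
the translates `w C` of the closed fundamental chamber `C`. A root `w αᵢ` is nonnegative or
nonpositive according to whether `w sᵢ` is longer or shorter than `w`; hence `C` is a strict
fundamental domain in which the stabilizer of a point is the parabolic subgroup of the simple
reflections fixing it. As `W` is finite, `V*` has an invariant inner product, and the point of an
orbit that pairs maximally with an interior point of `C` lies in `C`, so the chambers cover `V*`.

The cosets `u W_T` with `T ≠ S` are the faces of the chamber `u`, and choosing the translate of an
indicator vector inside each face refines the fan to its barycentric subdivision, in which every
vector is uniquely a positive combination of the vectors of a chain of cosets. Radial projection
is then a continuous bijection from the realization of the order complex onto the unit sphere, and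
the realization is compact.
-/

namespace CoxeterComplex

open Finsupp Set

lemma degree_smul {α : Type*} (a : ℝ) (μ : α →₀ ℝ) : (a • μ).degree = a * μ.degree := by
  rw [degree_eq_weight_one]
  exact map_smul (linearCombination ℝ _) a μ

lemma degree_pos_of_nonneg {α : Type*} {μ : α →₀ ℝ} (hμ : 0 ≤ μ) (h : μ ≠ 0) : 0 < μ.degree := by
  obtain ⟨p, hp⟩ := support_nonempty_iff.2 h
  exact Finset.sum_pos' (fun q _ => hμ q) ⟨p, hp, (hμ p).lt_of_ne' (mem_support_iff.1 hp)⟩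

/-! ### Order complexes and complete fans -/

section ChainCone

variable {P Q : Type*} [PartialOrder P] [PartialOrder Q]

/-- The cone over the order complex of `P`: a point is a nonnegative combination of the vertices
of a simplex, i.e. of the members of a finite chain. -/
def chainCone (P : Type*) [PartialOrder P] : Set (P →₀ ℝ) :=
  {μ | 0 ≤ μ ∧ IsChain (· ≤ ·) (μ.support : Set P)}

lemma smul_mem_chainCone {a : ℝ} (ha : 0 ≤ a) {μ : P →₀ ℝ} (hμ : μ ∈ chainCone P) :
    a • μ ∈ chainCone P :=
  ⟨smul_nonneg ha hμ.1, hμ.2.mono support_smul⟩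

lemma mapDomain_mem_chainCone {φ : P → Q} (hφ : Monotone φ) {μ : P →₀ ℝ}
    (hμ : μ ∈ chainCone P) : μ.mapDomain φ ∈ chainCone Q := by
  classical
  refine ⟨mapDomain_nonneg hμ.1, ?_⟩
  refine (hμ.2.image_of_map_rel _ (· ≤ ·) φ fun _ _ h => hφ h).mono ?_
  simpa using Finset.coe_subset.2 (mapDomain_support (f := φ) (s := μ))

lemma exists_mem_chainCone_mapDomain_eq (φ : P ↪o Q) {μ : Q →₀ ℝ} (hμ : μ ∈ chainCone Q)
    (h : (μ.support : Set Q) ⊆ range φ) : ∃ ν ∈ chainCone P, ν.mapDomain φ = μ := by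
  refine ⟨μ.comapDomain φ φ.injective.injOn, ⟨fun p => hμ.1 (φ p), ?_⟩,
    mapDomain_comapDomain _ φ.injective _ h⟩
  simpa using hμ.2.preimage _ (· ≤ ·) φ φ.injective fun _ _ => φ.le_iff_le.1

lemma add_single_mem_chainCone {μ : P →₀ ℝ} (hμ : μ ∈ chainCone P) {p : P}
    (hp : ∀ q ∈ μ.support, q ≤ p) {a : ℝ} (ha : 0 ≤ a) : μ + single p a ∈ chainCone P := by
  classical
  refine ⟨add_nonneg hμ.1 (single_nonneg.2 ha),
    (hμ.2.insert (a := p) fun q hq _ => Or.inr (hp q hq)).mono ?_⟩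
  rw [← Finset.coe_insert]
  exact Finset.coe_subset.2 (support_add.trans (Finset.union_subset (Finset.subset_insert _ _)
    (support_single_subset.trans (by simp))))

/-- The order complex of `P`, in barycentric coordinates. -/
def orderComplex (P : Type*) [PartialOrder P] : Set (P →₀ ℝ) :=
  {μ ∈ chainCone P | μ.degree = 1}

lemma mapDomain_mem_orderComplex {φ : P → Q} (hφ : Monotone φ) {μ : P →₀ ℝ}
    (hμ : μ ∈ orderComplex P) : μ.mapDomain φ ∈ orderComplex Q :=
  ⟨mapDomain_mem_chainCone hφ hμ.1, by rw [degree_mapDomain, hμ.2]⟩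

end ChainCone

section CompleteFan

variable {P E F : Type*} [PartialOrder P]

/-- The vectors `v p` are the ray generators of a complete simplicial fan in `E` whose cones are
spanned by the chains of `P`: every vector lies in the relative interior of exactly one cone and
has unique coordinates there. -/
def IsCompleteFan [AddCommGroup E] [Module ℝ E] (v : P → E) : Prop :=
  BijOn (linearCombination ℝ v) (chainCone P) univ

lemma IsCompleteFan.map [AddCommGroup E] [Module ℝ E] [AddCommGroup F] [Module ℝ F] {v : P → E}
    (hv : IsCompleteFan v) (e : E ≃ₗ[ℝ] F) : IsCompleteFan (e ∘ v) := by
  have h : ⇑(linearCombination ℝ (e ∘ v)) = e ∘ linearCombination ℝ v :=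
    funext fun μ => (apply_linearCombination ℝ (e : E →ₗ[ℝ] F) v μ).symm
  rw [IsCompleteFan, h]
  exact BijOn.comp (bijOn_univ.2 e.bijective) hv

variable [NormedAddCommGroup E] [NormedSpace ℝ E] {v : P → E}

lemma IsCompleteFan.linearCombination_ne_zero (hv : IsCompleteFan v) {μ : P →₀ ℝ}
    (hμ : μ ∈ orderComplex P) : linearCombination ℝ v μ ≠ 0 := by
  intro h
  have h0 : μ = 0 := hv.injOn hμ.1 ⟨le_rfl, by simp⟩ (by simpa using h)
  simpa [h0] using hμ.2

/-- The piecewise linear map that sends each vertex `p` to `v p`, followed by radial projection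
onto the unit sphere (with value `0` where the former vanishes). -/
noncomputable def radialMap (v : P → E) (μ : P →₀ ℝ) : E :=
  ‖linearCombination ℝ v μ‖⁻¹ • linearCombination ℝ v μ

theorem IsCompleteFan.bijOn_radialMap (hv : IsCompleteFan v) :
    BijOn (radialMap v) (orderComplex P) (Metric.sphere 0 1) := by
  refine ⟨fun μ hμ => ?_, fun μ hμ ν hν h => ?_, fun z hz => ?_⟩
  · simpa [radialMap] using norm_smul_inv_norm (𝕜 := ℝ) (hv.linearCombination_ne_zero hμ)
  · set a := ‖linearCombination ℝ v μ‖⁻¹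
    set b := ‖linearCombination ℝ v ν‖⁻¹
    have hab : a • μ = b • ν := by
      refine hv.injOn (smul_mem_chainCone (by positivity) hμ.1)
        (smul_mem_chainCone (by positivity) hν.1) ?_
      rwa [map_smul, map_smul]
    have ha : a ≠ 0 := by simpa [a] using hv.linearCombination_ne_zero hμ
    have hdeg := congrArg degree hab
    rw [degree_smul, degree_smul, hμ.2, hν.2, mul_one, mul_one] at hdeg
    rw [← hdeg] at hab
    exact smul_right_injective _ ha hab
  · obtain ⟨μ, hμ, rfl⟩ := hv.surjOn (mem_univ z)
    have hμ0 : μ ≠ 0 := by rintro rfl; simp at hz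
    have ha := degree_pos_of_nonneg hμ.1 hμ0
    refine ⟨(degree μ)⁻¹ • μ, ⟨smul_mem_chainCone (by positivity) hμ, ?_⟩, ?_⟩
    · rw [degree_smul, inv_mul_cancel₀ ha.ne']
    · have hz : ‖linearCombination ℝ v μ‖ = 1 := by simpa using hz
      rw [radialMap, map_smul, norm_smul, hz, smul_smul]
      simp [abs_of_pos ha, ha.ne']

end CompleteFan

/-! ### The geometric realization of the nerve -/

section Realization

open Opposite

universe u

variable {X : SSet.{u}} {Y : Type u}

/-- The characteristic map of a simplex of `X` into the geometric realization of `X`, obtained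
from the unit of the adjunction with the singular simplicial set. -/
noncomputable def simplexMap {n : SimplexCategory} (x : X.obj (op n)) :
    C(stdSimplex ℝ (Fin (n.len + 1)), SSet.toTop.obj X) :=
  TopCat.toSSetObjEquiv _ _ ((sSetTopAdj.unit.app X).app _ x)

lemma simplexMap_map {n k : SimplexCategory} (x : X.obj (op n)) (f : k ⟶ n)
    (t : stdSimplex ℝ (Fin (k.len + 1))) :
    simplexMap (X.map f.op x) t = simplexMap x (stdSimplex.map f t) := by
  have h := ConcreteCategory.congr_hom ((sSetTopAdj.unit.app X).naturality f.op) x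
  exact congrArg (fun a => TopCat.toSSetObjEquiv _ _ a t) h

lemma toSSetObjEquiv_homEquiv {Y : TopCat.{u}} (F : SSet.toTop.obj X ⟶ Y) {n : SimplexCategory}
    (x : X.obj (op n)) (t : stdSimplex ℝ (Fin (n.len + 1))) :
    TopCat.toSSetObjEquiv Y _ ((sSetTopAdj.homEquiv X Y F).app _ x) t = F (simplexMap x t) := by
  rw [Adjunction.homEquiv_unit]
  rfl

lemma toTop_hom_ext {Y : TopCat.{u}} {F G : SSet.toTop.obj X ⟶ Y}
    (h : ∀ {n} (x : X.obj (op n)) t, F (simplexMap x t) = G (simplexMap x t)) : F = G := by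
  refine (sSetTopAdj.homEquiv X Y).injective ?_
  ext ⟨n⟩ x
  refine (TopCat.toSSetObjEquiv Y _).injective (ContinuousMap.ext fun t => ?_)
  exact (toSSetObjEquiv_homEquiv F x t).trans ((h x t).trans (toSSetObjEquiv_homEquiv G x t).symm)

lemma exists_simplexMap_eq (a : SSet.toTop.obj X) :
    ∃ (n : SimplexCategory) (x : X.obj (op n)) (t : _), simplexMap x t = a := by
  -- Maps into an indiscrete space are automatically continuous, so a predicate on the realization
  -- is determined by its pullbacks along the simplices.
  let := (⊤ : TopologicalSpace (ULift.{u} Prop))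
  let F (p : SSet.toTop.obj X → Prop) :
      SSet.toTop.obj X ⟶ TopCat.of (ULift.{u} Prop) :=
    TopCat.ofHom ⟨fun a => ⟨p a⟩, continuous_top⟩
  have h : F (fun a => ∃ (n : SimplexCategory) (x : X.obj (op n)) (t : _), simplexMap x t = a) =
      F fun _ => True :=
    toTop_hom_ext fun x t => congrArg ULift.up (eq_true ⟨_, x, t, rfl⟩)
  exact of_eq_true (congrArg ULift.down (ConcreteCategory.congr_hom h a))

lemma exists_continuousMap_simplexMap_eq [TopologicalSpace Y]
    (c : ∀ {n : SimplexCategory}, X.obj (op n) → C(stdSimplex ℝ (Fin (n.len + 1)), Y))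
    (hc : ∀ {n k : SimplexCategory} (x : X.obj (op n)) (f : k ⟶ n) (t : _),
      c (X.map f.op x) t = c x (stdSimplex.map f t)) :
    ∃ F : C(SSet.toTop.obj X, Y),
      ∀ {n : SimplexCategory} (x : X.obj (op n)) (t : _), F (simplexMap x t) = c x t := by
  let g : X ⟶ TopCat.toSSet.obj (TopCat.of Y) :=
    { app n := TypeCat.ofHom fun x => (TopCat.toSSetObjEquiv (TopCat.of Y) n).symm (c x)
      naturality n k f := by
        ext x
        exact (TopCat.toSSetObjEquiv (TopCat.of Y) k).injective
          (ContinuousMap.ext (hc x f.unop)) }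
  refine ⟨((sSetTopAdj.homEquiv _ _).symm g).hom, fun x t => ?_⟩
  have h := toSSetObjEquiv_homEquiv ((sSetTopAdj.homEquiv _ _).symm g) x t
  rw [Equiv.apply_symm_apply] at h
  exact h.symm

lemma exists_simplexMap_eq_of_compatible
    (c : ∀ {n : SimplexCategory}, X.obj (op n) → stdSimplex ℝ (Fin (n.len + 1)) → Y)
    (hc : ∀ {n k : SimplexCategory} (x : X.obj (op n)) (f : k ⟶ n) (t : _),
      c (X.map f.op x) t = c x (stdSimplex.map f t)) :
    ∃ F : SSet.toTop.obj X → Y,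
      ∀ {n : SimplexCategory} (x : X.obj (op n)) (t : _), F (simplexMap x t) = c x t := by
  let := (⊤ : TopologicalSpace Y)
  obtain ⟨F, hF⟩ := exists_continuousMap_simplexMap_eq
    (fun {n} (x : X.obj (op n)) => ⟨c x, continuous_top⟩) hc
  exact ⟨F, hF⟩

lemma continuous_of_continuous_comp_simplexMap [TopologicalSpace Y] {F : SSet.toTop.obj X → Y}
    (h : ∀ {n : SimplexCategory} (x : X.obj (op n)), Continuous (F ∘ simplexMap x)) :
    Continuous F := by
  obtain ⟨G, hG⟩ := exists_continuousMap_simplexMap_eq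
    (fun {n} (x : X.obj (op n)) => ⟨_, h x⟩) fun x f t => congrArg F (simplexMap_map x f t)
  convert G.continuous
  ext a
  obtain ⟨n, x, t, rfl⟩ := exists_simplexMap_eq a
  exact (hG x t).symm

end Realization

section Nerve

open Simplicial Opposite

universe u

variable {P : Type u} {ι κ : Type*} [Fintype ι] [Fintype κ]

/-- The point with barycentric coordinates `t` in the simplex with vertices `σ i`, possibly
repeated, as a weight on all of `P`. -/
noncomputable def weights (σ : ι → P) (t : stdSimplex ℝ ι) : P →₀ ℝ :=
  (equivFunOnFinite.symm t).mapDomain σ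

lemma weights_map (σ : κ → P) (f : ι → κ) (t : stdSimplex ℝ ι) :
    weights σ (stdSimplex.map f t) = weights (σ ∘ f) t := by
  rw [weights, weights, mapDomain_comp]
  exact congrArg (mapDomain σ) (Equiv.symm_apply_apply equivFunOnFinite _)

lemma weights_injective {σ : ι → P} (hσ : Function.Injective σ) :
    Function.Injective (weights σ) :=
  (mapDomain_injective hσ).comp (equivFunOnFinite.symm.injective.comp DFunLike.coe_injective)

lemma support_weights_subset (σ : ι → P) (t : stdSimplex ℝ ι) :
    ((weights σ t).support : Set P) ⊆ range σ := by
  classical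
  refine (Finset.coe_subset.2 mapDomain_support).trans ?_
  simp

lemma linearCombination_weights {E : Type*} [AddCommGroup E] [Module ℝ E] (v : P → E) (σ : ι → P)
    (t : stdSimplex ℝ ι) : linearCombination ℝ v (weights σ t) = ∑ i, t i • v (σ i) := by
  rw [weights, linearCombination_mapDomain, linearCombination_apply]
  exact sum_fintype _ _ fun _ => zero_smul ℝ _

variable [PartialOrder P]

lemma weights_mem_orderComplex [LinearOrder ι] {σ : ι → P} (hσ : Monotone σ)
    (t : stdSimplex ℝ ι) : weights σ t ∈ orderComplex P := by
  refine mapDomain_mem_orderComplex hσ ⟨⟨fun i => t.2.1 i, ?_⟩, ?_⟩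
  · exact isChain_of_trichotomous _
  · rw [degree_eq_sum]
    exact t.2.2

lemma exists_weights_eq [PartialOrder ι] (φ : ι ↪o P) {μ : P →₀ ℝ} (hμ : μ ∈ orderComplex P)
    (h : (μ.support : Set P) ⊆ range φ) : ∃ t, weights φ t = μ := by
  obtain ⟨ν, hν, rfl⟩ := exists_mem_chainCone_mapDomain_eq φ hμ.1 h
  refine ⟨⟨ν, hν.1, ?_⟩, congrArg (mapDomain φ) (Equiv.symm_apply_apply equivFunOnFinite _)⟩
  rw [← degree_eq_sum, ← degree_mapDomain φ, hμ.2]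

lemma exists_orderEmbedding_range_eq {K : Set P} (hK : K.Finite) (hne : K.Nonempty)
    (hchain : IsChain (· ≤ ·) K) : ∃ (n : ℕ) (φ : Fin (n + 1) ↪o P), range φ = K := by
  classical
  let := hchain.linearOrder
  have := hK.fintype
  obtain ⟨n, hn⟩ := Nat.exists_eq_succ_of_ne_zero (Fintype.card_pos_iff.2 hne.to_subtype).ne'
  let e : Fin (n + 1) ≃o K := Fintype.orderIsoFinOfCardEq K hn
  refine ⟨n, e.toOrderEmbedding.trans (OrderEmbedding.subtype (· ∈ K)), ?_⟩
  exact (e.surjective.range_comp _).trans Subtype.range_coe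

lemma exists_orderHom_comp_eq {α β : Type*} [Preorder α] [Preorder β] {σ : α → P}
    (hσ : Monotone σ) (φ : β ↪o P) (h : range σ ⊆ range φ) : ∃ f : α →o β, φ ∘ f = σ := by
  choose f hf using fun a => h (mem_range_self a)
  exact ⟨⟨f, fun a b hab => φ.le_iff_le.1 (by simpa only [hf] using hσ hab)⟩, funext hf⟩

/-- The characteristic map of the simplex of the order complex with vertices
`σ 0 ≤ σ 1 ≤ ⋯ ≤ σ n`. -/
noncomputable def chainMap {n : ℕ} (σ : Fin (n + 1) →o P) :
    C(stdSimplex ℝ (Fin (n + 1)), SSet.toTop.obj (nerve P)) :=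
  simplexMap (n := ⦋n⦌) (OrderHom.equivFunctor σ)

lemma chainMap_comp {n k : ℕ} (σ : Fin (n + 1) →o P) (f : Fin (k + 1) →o Fin (n + 1))
    (t : stdSimplex ℝ (Fin (k + 1))) : chainMap (σ.comp f) t = chainMap σ (stdSimplex.map f t) :=
  simplexMap_map (X := nerve P) (n := ⦋n⦌) (OrderHom.equivFunctor σ) (SimplexCategory.mkHom f) t

lemma chainMap_eq_of_weights_eq {n k : ℕ} (σ : Fin (n + 1) →o P) (φ : Fin (k + 1) ↪o P)
    (hφ : range φ ⊆ range σ) {t : stdSimplex ℝ (Fin (n + 1))} {r : stdSimplex ℝ (Fin (k + 1))}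
    (h : weights σ t = weights φ r) : chainMap σ t = chainMap φ.toOrderHom r := by
  obtain ⟨m, κ, hκ⟩ := exists_orderEmbedding_range_eq (finite_range σ) (range_nonempty σ)
    σ.monotone.isChain_range
  obtain ⟨f, hf⟩ := exists_orderHom_comp_eq σ.monotone κ hκ.ge
  obtain ⟨g, hg⟩ := exists_orderHom_comp_eq φ.monotone κ (hφ.trans hκ.ge)
  have hσ : κ.toOrderHom.comp f = σ := OrderHom.ext _ _ hf
  have hφ' : κ.toOrderHom.comp g = φ.toOrderHom := OrderHom.ext _ _ hg
  rw [← hf, ← hg, ← weights_map, ← weights_map] at h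
  rw [← hσ, ← hφ', chainMap_comp, chainMap_comp, weights_injective κ.injective h]

lemma exists_chainMap_eq (a : SSet.toTop.obj (nerve P)) :
    ∃ (n : ℕ) (σ : Fin (n + 1) →o P) (t : _), chainMap σ t = a := by
  obtain ⟨n, x, t, rfl⟩ := exists_simplexMap_eq a
  exact ⟨n.len, OrderHom.equivFunctor.symm x, t, rfl⟩

lemma exists_barycentric (P : Type u) [PartialOrder P] :
    ∃ b : SSet.toTop.obj (nerve P) → P →₀ ℝ,
      ∀ {n : ℕ} (σ : Fin (n + 1) →o P) (t : _), b (chainMap σ t) = weights σ t := by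
  obtain ⟨b, hb⟩ := exists_simplexMap_eq_of_compatible (X := nerve P)
    (fun {n} x t => weights (OrderHom.equivFunctor.symm x) t)
    fun x f t => (weights_map (OrderHom.equivFunctor.symm x) f t).symm
  exact ⟨b, fun {n} σ t => hb (n := ⦋n⦌) (OrderHom.equivFunctor σ) t⟩

/-- The barycentric coordinates of a point of the geometric realization of the nerve of `P`. -/
noncomputable def barycentric : SSet.toTop.obj (nerve P) → P →₀ ℝ :=
  (exists_barycentric P).choose

lemma barycentric_chainMap {n : ℕ} (σ : Fin (n + 1) →o P) (t : stdSimplex ℝ (Fin (n + 1))) :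
    barycentric (chainMap σ t) = weights σ t :=
  (exists_barycentric P).choose_spec σ t

lemma exists_orderEmbedding_weights_eq {μ : P →₀ ℝ} (hμ : μ ∈ orderComplex P) :
    ∃ (n : ℕ) (φ : Fin (n + 1) ↪o P) (r : _), range φ = μ.support ∧ weights φ r = μ := by
  have hne : (μ.support : Set P).Nonempty := by
    rw [Finset.coe_nonempty, support_nonempty_iff]
    rintro rfl
    simpa using hμ.2
  obtain ⟨n, φ, hφ⟩ := exists_orderEmbedding_range_eq μ.support.finite_toSet hne hμ.1.2
  obtain ⟨r, hr⟩ := exists_weights_eq φ hμ hφ.ge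
  exact ⟨n, φ, r, hφ, hr⟩

theorem bijOn_barycentric : BijOn barycentric univ (orderComplex P) := by
  refine ⟨fun a _ => ?_, fun a _ b _ hab => ?_, fun μ hμ => ?_⟩
  · obtain ⟨n, σ, t, rfl⟩ := exists_chainMap_eq a
    rw [barycentric_chainMap]
    exact weights_mem_orderComplex σ.monotone t
  · obtain ⟨n, σ, t, rfl⟩ := exists_chainMap_eq a
    obtain ⟨k, τ, s, rfl⟩ := exists_chainMap_eq b
    rw [barycentric_chainMap, barycentric_chainMap] at hab
    obtain ⟨m, φ, r, hφ, hr⟩ :=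
      exists_orderEmbedding_weights_eq (weights_mem_orderComplex σ.monotone t)
    have hσ : range φ ⊆ range σ := hφ ▸ support_weights_subset σ t
    have hτ : range φ ⊆ range τ := by
      rw [hφ, hab]
      exact support_weights_subset τ s
    rw [chainMap_eq_of_weights_eq σ φ hσ hr.symm,
      chainMap_eq_of_weights_eq τ φ hτ (hab.symm.trans hr.symm)]
  · obtain ⟨n, φ, r, -, rfl⟩ := exists_orderEmbedding_weights_eq hμ
    exact ⟨chainMap φ.toOrderHom r, mem_univ _, barycentric_chainMap _ _⟩

lemma continuous_linearCombination_barycentric {E : Type u} [AddCommGroup E] [Module ℝ E]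
    [TopologicalSpace E] [ContinuousAdd E] [ContinuousSMul ℝ E] (v : P → E) :
    Continuous fun a : SSet.toTop.obj (nerve P) => linearCombination ℝ v (barycentric a) := by
  refine continuous_of_continuous_comp_simplexMap fun {n} x => ?_
  have h (t : stdSimplex ℝ (Fin (n.len + 1))) : linearCombination ℝ v (barycentric
      (simplexMap x t)) = ∑ i, t i • v (OrderHom.equivFunctor.symm x i) := by
    rw [← linearCombination_weights, ← barycentric_chainMap]
    rfl
  simp only [Function.comp_def, h]
  exact continuous_finsetSum _ fun i _ =>
    ((continuous_apply i).comp continuous_subtype_val).smul continuous_const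

lemma compactSpace_toTop_nerve [Finite P] : CompactSpace (SSet.toTop.obj (nerve P)) := by
  have hcover : (⋃ x : Σ n : Fin (Nat.card P), Fin (n + 1) →o P, range (chainMap x.2)) = univ := by
    refine eq_univ_of_forall fun a => ?_
    obtain ⟨n, φ, r, -, hr⟩ :=
      exists_orderEmbedding_weights_eq (bijOn_barycentric.mapsTo (mem_univ a))
    have hn : n < Nat.card P := by simpa using Nat.card_le_card_of_injective φ φ.injective
    refine mem_iUnion.2 ⟨⟨⟨n, hn⟩, φ.toOrderHom⟩, r, ?_⟩
    exact bijOn_barycentric.injOn (mem_univ _) (mem_univ _) ((barycentric_chainMap _ _).trans hr)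
  have : ∀ n : ℕ, Finite (Fin (n + 1) →o P) := fun n => DFunLike.finite _
  rw [← isCompact_univ_iff, ← hcover]
  exact isCompact_iUnion fun x => isCompact_range (chainMap x.2).continuous

theorem IsCompleteFan.nonempty_homeomorph_sphere [Finite P] {E : Type u} [NormedAddCommGroup E]
    [NormedSpace ℝ E] {v : P → E} (hv : IsCompleteFan v) :
    Nonempty (SSet.toTop.obj (nerve P) ≃ₜ Metric.sphere (0 : E) 1) := by
  have hbij : BijOn (radialMap v ∘ barycentric) univ (Metric.sphere 0 1) :=
    hv.bijOn_radialMap.comp bijOn_barycentric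
  have hlin := continuous_linearCombination_barycentric v
  have hcont : Continuous (radialMap v ∘ barycentric) := by
    refine (hlin.norm.inv₀ fun a => ?_).smul hlin
    exact norm_ne_zero_iff.2
      (hv.linearCombination_ne_zero (bijOn_barycentric.mapsTo (mem_univ a)))
  have := compactSpace_toTop_nerve (P := P)
  let e := (Equiv.Set.univ _).symm.trans (hbij.equiv _)
  exact ⟨Continuous.homeoOfEquivCompactToT2 (f := e) (hcont.subtype_mk _)⟩

end Nerve

/-! ### The barycentric subdivision of the orthant -/

section Orthant

/-- `sumAbove μ p` is the sum of the coefficients of `μ` at the elements above `p`. -/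
noncomputable def sumAbove {P : Type*} [PartialOrder P] : (P →₀ ℝ) →ₗ[ℝ] P → ℝ :=
  linearCombination ℝ fun q => (Iic q).indicator 1

lemma sumAbove_apply {P : Type*} [PartialOrder P] (μ : P →₀ ℝ) (p : P) :
    sumAbove μ p = linearCombination ℝ (fun q => (Iic q).indicator (1 : P → ℝ) p) μ :=
  apply_linearCombination ℝ (LinearMap.proj p : (P → ℝ) →ₗ[ℝ] ℝ) _ _

lemma sumAbove_injective {P : Type*} [PartialOrder P] :
    Function.Injective (sumAbove : (P →₀ ℝ) →ₗ[ℝ] P → ℝ) := by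
  refine (injective_iff_map_eq_zero _).2 fun μ hμ => ?_
  by_contra h
  obtain ⟨q, hq, hmax⟩ := μ.support.exists_maximal (support_nonempty_iff.2 h)
  have hsum : ∑ p ∈ μ.support, μ p * (Iic p).indicator 1 q = 0 := by
    simpa [sumAbove_apply, linearCombination_apply, Finsupp.sum] using congrFun hμ q
  rw [Finset.sum_eq_single_of_mem q hq fun p hp hpq => ?_] at hsum
  · simp_all
  · have : ¬ q ≤ p := fun hqp => hpq (le_antisymm (hmax hp hqp) hqp)
    simp [this]

lemma linearCombination_mono {α : Type*} {μ : α →₀ ℝ} (hμ : 0 ≤ μ) {f g : α → ℝ}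
    (h : ∀ a ∈ μ.support, f a ≤ g a) : linearCombination ℝ f μ ≤ linearCombination ℝ g μ :=
  Finset.sum_le_sum fun a ha => mul_le_mul_of_nonneg_left (h a ha) (hμ a)

lemma indicator_one_le_indicator_one {α β : Type*} {s : Set α} {t : Set β} {a : α} {b : β}
    (h : a ∈ s → b ∈ t) : s.indicator (1 : α → ℝ) a ≤ t.indicator (1 : β → ℝ) b := by
  by_cases ha : a ∈ s
  · simp [ha, h ha]
  · simpa [ha] using indicator_nonneg (f := (1 : β → ℝ)) (fun _ _ => zero_le_one) b

variable {B : Type*}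

/-- The indicator vectors of the nonempty subsets of `B`: they span the rays of the barycentric
subdivision of the orthant of nonnegative vectors. -/
noncomputable def indicatorVector (A : {A : Set B // A.Nonempty}) : B → ℝ :=
  A.1.indicator 1

lemma linearCombination_indicatorVector_apply (μ : {A : Set B // A.Nonempty} →₀ ℝ) (s : B) :
    linearCombination ℝ indicatorVector μ s =
      linearCombination ℝ (fun A => A.1.indicator (1 : B → ℝ) s) μ :=
  apply_linearCombination ℝ (LinearMap.proj s : (B → ℝ) →ₗ[ℝ] ℝ) _ _

lemma linearCombination_indicatorVector_nonneg {μ : {A : Set B // A.Nonempty} →₀ ℝ}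
    (hμ : 0 ≤ μ) : 0 ≤ linearCombination ℝ indicatorVector μ :=
  Finset.sum_nonneg fun A _ => smul_nonneg (hμ A) (indicator_nonneg fun _ _ => zero_le_one)

lemma linearCombination_indicatorVector_pos {μ : {A : Set B // A.Nonempty} →₀ ℝ} (hμ : 0 ≤ μ)
    {A : {A : Set B // A.Nonempty}} (hA : A ∈ μ.support) {s : B} (hs : s ∈ A.1) :
    0 < linearCombination ℝ indicatorVector μ s := by
  rw [linearCombination_indicatorVector_apply]
  refine Finset.sum_pos' (fun A' _ => mul_nonneg (hμ A') (indicator_nonneg (by simp) _))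
    ⟨A, hA, ?_⟩
  simpa [hs] using (hμ A).lt_of_ne' (mem_support_iff.1 hA)

lemma exists_mem_forall_mem_imp_subset {C : Set (Set B)} (hC : C.Finite)
    (hchain : IsChain (· ≤ ·) C) {D : Set B} (hD : D.Nonempty) :
    ∃ s ∈ D, ∀ A ∈ C, s ∈ A → D ⊆ A := by
  rcases (C ∩ {A | ¬ D ⊆ A}).eq_empty_or_nonempty with hempty | hne
  · obtain ⟨s, hs⟩ := hD
    refine ⟨s, hs, fun A hA _ => ?_⟩
    by_contra hDA
    exact hempty.le ⟨hA, hDA⟩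
  · obtain ⟨A₀, ⟨hA₀, hDA₀⟩, hmax⟩ := (hC.inter_of_left _).exists_maximal hne
    obtain ⟨s, hs, hsA₀⟩ := not_subset.1 hDA₀
    refine ⟨s, hs, fun A hA hsA => ?_⟩
    by_contra hDA
    rcases hchain.total hA hA₀ with h | h
    · exact hsA₀ (h hsA)
    · exact hsA₀ (hmax ⟨hA, hDA⟩ h hsA)

lemma sumAbove_le_sumAbove {μ ν : {A : Set B // A.Nonempty} →₀ ℝ} (hμ : μ ∈ chainCone _)
    (hν : 0 ≤ ν)
    (h : linearCombination ℝ indicatorVector μ = linearCombination ℝ indicatorVector ν) :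
    sumAbove ν ≤ sumAbove μ := by
  intro D
  -- Some `s ∈ D` lies in no member of the chain other than those containing all of `D`, so the
  -- coordinate at `s` of the common value is `sumAbove μ D` and is at least `sumAbove ν D`.
  obtain ⟨s, hs, hsD⟩ := exists_mem_forall_mem_imp_subset
    (μ.support.finite_toSet.image Subtype.val)
    (hμ.2.image_of_map_rel _ (· ≤ ·) Subtype.val fun _ _ h => h) D.2
  have hμν := congrFun h s
  rw [linearCombination_indicatorVector_apply, linearCombination_indicatorVector_apply] at hμν
  rw [sumAbove_apply, sumAbove_apply]
  calc linearCombination ℝ (fun A => (Iic A).indicator 1 D) ν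
      ≤ linearCombination ℝ (fun A => A.1.indicator 1 s) ν :=
        linearCombination_mono hν fun A _ =>
          indicator_one_le_indicator_one fun hDA : D ≤ A => hDA hs
    _ = linearCombination ℝ (fun A => A.1.indicator 1 s) μ := hμν.symm
    _ ≤ linearCombination ℝ (fun A => (Iic A).indicator 1 D) μ :=
        linearCombination_mono hμ.1 fun A hA =>
          indicator_one_le_indicator_one fun hsA => hsD _ (mem_image_of_mem _ hA) hsA

theorem injOn_linearCombination_indicatorVector :
    InjOn (linearCombination ℝ (indicatorVector (B := B))) (chainCone _) := fun _ hμ _ hν h =>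
  sumAbove_injective (le_antisymm (sumAbove_le_sumAbove hν hμ.1 h.symm)
    (sumAbove_le_sumAbove hμ hν.1 h))

theorem exists_linearCombination_indicatorVector_eq {c : B → ℝ} (hc : 0 ≤ c)
    (hfin : (Function.support c).Finite) :
    ∃ μ ∈ chainCone _, linearCombination ℝ indicatorVector μ = c := by
  induction hn : (Function.support c).ncard using Nat.strong_induction_on generalizing c with
  | _ n ih =>
    subst hn
    rcases (Function.support c).eq_empty_or_nonempty with hempty | hne
    · exact ⟨0, ⟨le_rfl, by simp⟩, by simp [Function.support_eq_empty_iff.1 hempty]⟩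
    set S : {A : Set B // A.Nonempty} := ⟨Function.support c, hne⟩
    obtain ⟨s₀, hs₀, hmin⟩ := exists_min_image _ c hfin hne
    set c' : B → ℝ := c - c s₀ • indicatorVector S with hc'
    have hc'_mem {s : B} (hs : s ∈ S.1) : c' s = c s - c s₀ := by simp [hc', indicatorVector, hs]
    have hc'_notMem {s : B} (hs : s ∉ S.1) : c' s = 0 := by
      have : c s = 0 := Function.notMem_support.1 hs
      simp [hc', indicatorVector, hs, this]
    have hc'_nonneg : 0 ≤ c' := fun s => by
      by_cases hs : s ∈ S.1
      · simpa [hc'_mem hs] using hmin s hs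
      · exact (hc'_notMem hs).ge
    have hc'_support : Function.support c' ⊆ S.1 := fun s hs => by
      by_contra h
      exact hs (hc'_notMem h)
    have hlt : (Function.support c').ncard < (Function.support c).ncard := by
      refine ncard_lt_ncard ⟨hc'_support, fun h => h hs₀ ?_⟩ hfin
      simp [hc'_mem hs₀]
    obtain ⟨ν, hν, hνc⟩ := ih _ hlt hc'_nonneg (hfin.subset hc'_support) rfl
    have hνS (A) (hA : A ∈ ν.support) : A ≤ S := fun s hs =>
      hc'_support (hνc ▸ linearCombination_indicatorVector_pos hν.1 hA hs).ne'
    refine ⟨ν + single S (c s₀), add_single_mem_chainCone hν hνS (hc s₀), ?_⟩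
    rw [map_add, hνc, linearCombination_single, sub_add_cancel]

end Orthant

/-! ### The geometric representation of a Coxeter group -/

section Reflection

open Polynomial.Chebyshev

lemma S_two_mul_cos_pi_div_nonneg {m k : ℕ} (hm : 2 ≤ m) (hk : k ≤ m) :
    0 ≤ (S ℝ (k - 1)).eval (2 * Real.cos (Real.pi / m)) := by
  have hm' : (2 : ℝ) ≤ m := by exact_mod_cast hm
  have hk' : (k : ℝ) ≤ m := by exact_mod_cast hk
  have hsin : 0 < Real.sin (Real.pi / m) :=
    Real.sin_pos_of_pos_of_lt_pi (by positivity) (div_lt_self Real.pi_pos (by linarith))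
  refine nonneg_of_mul_nonneg_left ?_ hsin
  rw [S_two_mul_real_cos]
  refine Real.sin_nonneg_of_nonneg_of_le_pi ?_ ?_
  · push_cast
    rw [sub_add_cancel]
    positivity
  · push_cast
    rw [sub_add_cancel, ← mul_div_assoc, div_le_iff₀ (by positivity), mul_comm]
    gcongr

lemma S_two_mul_cos_two_pi_div_eq_zero {p : ℕ} (hp : 2 ≤ p) :
    (S ℝ (p - 1)).eval (2 * Real.cos (2 * (Real.pi / (2 * p : ℕ)))) = 0 := by
  have hp' : (2 : ℝ) ≤ p := by exact_mod_cast hp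
  have hθ : 2 * (Real.pi / (2 * p : ℕ)) = Real.pi / p := by push_cast; field_simp
  have hsin : 0 < Real.sin (Real.pi / p) :=
    Real.sin_pos_of_pos_of_lt_pi (by positivity) (div_lt_self Real.pi_pos (by linarith))
  refine (mul_eq_zero.1 ?_).resolve_right hsin.ne'
  rw [hθ, S_two_mul_real_cos]
  push_cast
  rw [sub_add_cancel, mul_div_cancel₀ _ (by positivity), Real.sin_pi]

lemma S_two_mul_cos_two_pi_div_add_eq_zero {p : ℕ} (hp : 1 ≤ p) :
    (S ℝ p).eval (2 * Real.cos (2 * (Real.pi / (2 * p + 1 : ℕ)))) +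
      (S ℝ (p - 1)).eval (2 * Real.cos (2 * (Real.pi / (2 * p + 1 : ℕ)))) = 0 := by
  have hp' : (1 : ℝ) ≤ p := by exact_mod_cast hp
  set θ := Real.pi / (2 * p + 1 : ℕ) with hθ
  have hθπ : (2 * p + 1) * θ = Real.pi := by rw [hθ]; push_cast; field_simp
  have hθ0 : 0 < θ := by positivity
  have hsin : 0 < Real.sin (2 * θ) := Real.sin_pos_of_pos_of_lt_pi (by positivity) (by nlinarith)
  refine (mul_eq_zero.1 ?_).resolve_right hsin.ne'
  rw [add_mul, S_two_mul_real_cos, S_two_mul_real_cos]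
  have h₁ : ((p : ℤ) + 1) * (2 * θ) = θ + Real.pi := by push_cast; linear_combination hθπ
  have h₂ : (((p - 1 : ℤ) : ℝ) + 1) * (2 * θ) = Real.pi - θ := by
    push_cast; linear_combination hθπ
  rw [h₁, h₂, Real.sin_add_pi, Real.sin_pi_sub, neg_add_cancel]

lemma reflection_mul_reflection_pow_eq_one {V : Type*} [AddCommGroup V] [Module ℝ V] {x y : V}
    {f g : Module.Dual ℝ V} (hf : f x = 2) (hg : g y = 2) {m : ℕ} (hm : 3 ≤ m)
    (h : f y * g x = 4 * Real.cos (Real.pi / m) ^ 2) :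
    (Module.reflection hf * Module.reflection hg) ^ m = 1 := by
  have ht : 2 * Real.cos (2 * (Real.pi / m)) = f y * g x - 2 := by
    rw [h, Real.cos_two_mul]
    ring
  ext z
  rw [Module.reflection_mul_reflection_pow_apply hf hg m z _ ht]
  obtain ⟨p, rfl | rfl⟩ := Nat.even_or_odd' m
  · have e₁ : (((2 * p : ℕ) : ℤ) - 2) / 2 = p - 1 := by omega
    have e₂ : (((2 * p : ℕ) : ℤ) - 1) / 2 = p - 1 := by omega
    simp only [e₁, e₂, S_two_mul_cos_two_pi_div_eq_zero (show 2 ≤ p by omega), zero_mul, zero_smul,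
      add_zero, LinearEquiv.coe_one, id_eq]
  · have e₁ : (((2 * p + 1 : ℕ) : ℤ) - 1) / 2 = p := by omega
    have e₂ : (((2 * p + 1 : ℕ) : ℤ) - 3) / 2 = p - 1 := by omega
    have e₃ : ((2 * p + 1 : ℕ) : ℤ) / 2 = p := by omega
    have e₄ : (((2 * p + 1 : ℕ) : ℤ) - 2) / 2 = p - 1 := by omega
    simp only [e₁, e₂, e₃, e₄, S_two_mul_cos_two_pi_div_add_eq_zero (show 1 ≤ p by omega),
      mul_zero, zero_smul, add_zero, LinearEquiv.coe_one, id_eq]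

end Reflection

section GeometricRepresentation

open Polynomial.Chebyshev CoxeterSystem

variable {B W : Type*} [Group W] {M : CoxeterMatrix B}

/-- The simple coroot `αᵢ^∨`, as a functional on the span `B →₀ ℝ` of the simple roots
`αⱼ = single j 1`. -/
noncomputable def simpleCoroot (M : CoxeterMatrix B) (i : B) : Module.Dual ℝ (B →₀ ℝ) :=
  linearCombination ℝ fun j => -2 * Real.cos (Real.pi / M i j)

lemma simpleCoroot_single (i j : B) :
    simpleCoroot M i (single j 1) = -2 * Real.cos (Real.pi / M i j) := by
  simp [simpleCoroot]

lemma simpleCoroot_single_self (M : CoxeterMatrix B) (i : B) :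
    simpleCoroot M i (single i 1) = 2 := by
  simp [simpleCoroot_single]

lemma simpleCoroot_single_comm (i j : B) :
    simpleCoroot M i (single j 1) = simpleCoroot M j (single i 1) := by
  rw [simpleCoroot_single, simpleCoroot_single, M.symmetric]

lemma isLiftable_reflection (M : CoxeterMatrix B) :
    M.IsLiftable fun i => Module.reflection (simpleCoroot_single_self M i) := by
  intro i j
  rcases eq_or_ne i j with rfl | hij
  · rw [M.diagonal, pow_one]
    ext1 z
    exact Module.involutive_reflection (simpleCoroot_single_self M i) z
  have h₁ : M i j ≠ 1 := M.off_diagonal i j hij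
  obtain h₀ | h₂ | h₃ : M i j = 0 ∨ M i j = 2 ∨ 3 ≤ M i j := by omega
  · rw [h₀, pow_zero]
  · have hij : simpleCoroot M i (single j 1) = 0 := by simp [simpleCoroot_single, h₂]
    have hji : simpleCoroot M j (single i 1) = 0 := by rw [simpleCoroot_single_comm, hij]
    rw [h₂, pow_two]
    ext1 z
    simp only [LinearEquiv.mul_apply, Module.reflection_apply, map_sub, map_smul, hij, hji,
      simpleCoroot_single_self, LinearEquiv.coe_one, id_eq]
    module
  · refine reflection_mul_reflection_pow_eq_one (simpleCoroot_single_self M i)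
      (simpleCoroot_single_self M j) h₃ ?_
    rw [simpleCoroot_single_comm j, simpleCoroot_single]
    ring

variable (cs : CoxeterSystem M W)

/-- The geometric representation of Tits, in which the simple reflections act on the span of the
simple roots as the reflections given by the simple roots and coroots. -/
noncomputable def geometricRep : Representation ℝ W (B →₀ ℝ) :=
  LinearEquiv.automorphismGroup.toLinearMapMonoidHom.comp (cs.lift ⟨_, isLiftable_reflection M⟩)

lemma geometricRep_simple (i : B) (z : B →₀ ℝ) :
    geometricRep cs (cs.simple i) z = z - simpleCoroot M i z • single i 1 := by
  rw [geometricRep, MonoidHom.comp_apply, cs.lift_apply_simple]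
  exact Module.reflection_apply z (simpleCoroot_single_self M i)

lemma geometricRep_alternatingWord (i j : B) (k : ℕ) :
    geometricRep cs (cs.wordProd (alternatingWord i j k)) (single i 1) =
      if Even k then
        (S ℝ k).eval (-simpleCoroot M i (single j 1)) • single i 1 +
          (S ℝ (k - 1)).eval (-simpleCoroot M i (single j 1)) • single j 1
      else
        (S ℝ (k - 1)).eval (-simpleCoroot M i (single j 1)) • single i 1 +
          (S ℝ k).eval (-simpleCoroot M i (single j 1)) • single j 1 := by
  induction k with
  | zero => simp [alternatingWord]
  | succ k ih =>
    have hS : (S ℝ (k + 1 : ℕ)).eval (-simpleCoroot M i (single j 1)) =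
        -simpleCoroot M i (single j 1) * (S ℝ k).eval (-simpleCoroot M i (single j 1)) -
          (S ℝ (k - 1)).eval (-simpleCoroot M i (single j 1)) := by
      simp [S_add_one]
    rw [alternatingWord_succ', cs.wordProd_cons, map_mul, Module.End.mul_apply, ih, hS]
    by_cases hk : Even k <;>
    · simp only [Nat.even_add_one, hk, not_true_eq_false, not_false_eq_true, if_true, if_false,
        geometricRep_simple, map_add, map_smul, simpleCoroot_single_self,
        simpleCoroot_single_comm j i, Nat.cast_succ, add_sub_cancel_right]
      module

lemma S_neg_simpleCoroot_nonneg {i j : B} (hij : i ≠ j) {k : ℕ} (hk : M i j = 0 ∨ k ≤ M i j) :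
    0 ≤ (S ℝ (k - 1)).eval (-simpleCoroot M i (single j 1)) := by
  rw [simpleCoroot_single, neg_mul, neg_neg]
  have h₁ : M i j ≠ 1 := M.off_diagonal i j hij
  obtain h₀ | h₂ : M i j = 0 ∨ 2 ≤ M i j := by omega
  · simp [h₀, S_eval_two]
  · exact S_two_mul_cos_pi_div_nonneg h₂ (hk.resolve_left (by omega))

lemma exists_eq_mul_alternatingWord (w : W) {i j : B} (hi : ¬ cs.IsRightDescent w i) :
    ∃ (k : ℕ) (v : W), w = v * cs.wordProd (alternatingWord i j k) ∧
      cs.length w = cs.length v + k ∧ ¬ cs.IsRightDescent v i ∧ ¬ cs.IsRightDescent v j := by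
  induction hn : cs.length w using Nat.strong_induction_on generalizing w i j with
  | _ n ih =>
    subst hn
    by_cases hj : cs.IsRightDescent w j
    · obtain ⟨k, v, hw, hlen, hvj, hvi⟩ :=
        ih _ hj _ (j := i) (cs.isRightDescent_iff_not_isRightDescent_mul.1 hj) rfl
      refine ⟨k + 1, v, ?_, ?_, hvi, hvj⟩
      · rw [alternatingWord_succ, cs.wordProd_concat, ← mul_assoc, ← hw,
          cs.simple_mul_simple_cancel_right]
      · rw [cs.isRightDescent_iff] at hj
        omega
    · exact ⟨0, w, by simp [alternatingWord], rfl, hi, hj⟩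

lemma lt_of_eq_mul_alternatingWord {w v : W} {i j : B} {k : ℕ} (hM : M i j ≠ 0)
    (hw : w = v * cs.wordProd (alternatingWord i j k)) (hlen : cs.length w = cs.length v + k)
    (hi : ¬ cs.IsRightDescent w i) : k < M i j := by
  have hred : cs.IsReduced (alternatingWord j i (k + 1)) := by
    have hwi : w * cs.simple i = v * cs.wordProd (alternatingWord j i (k + 1)) := by
      rw [alternatingWord_succ, cs.wordProd_concat, hw, mul_assoc]
    have h₁ := cs.length_mul_le v (cs.wordProd (alternatingWord j i (k + 1)))
    have h₂ := cs.length_wordProd_le (alternatingWord j i (k + 1))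
    rw [cs.not_isRightDescent_iff, hwi] at hi
    rw [length_alternatingWord] at h₂
    rw [CoxeterSystem.IsReduced, length_alternatingWord]
    omega
  by_contra h
  exact cs.not_isReduced_alternatingWord j i (by rwa [M.symmetric]) (by rw [M.symmetric]; omega)
    hred

theorem geometricRep_single_nonneg {w : W} {i : B} (hi : ¬ cs.IsRightDescent w i) :
    0 ≤ geometricRep cs w (single i 1) := by
  induction hn : cs.length w using Nat.strong_induction_on generalizing w i with
  | _ n ih =>
    subst hn
    rcases eq_or_ne w 1 with rfl | hw₁
    · simp
    obtain ⟨j, hj⟩ := cs.exists_rightDescent_of_ne_one hw₁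
    have hij : i ≠ j := by rintro rfl; exact hi hj
    obtain ⟨k, v, hw, hlen, hvi, hvj⟩ := exists_eq_mul_alternatingWord cs w (j := j) hi
    have hk : k ≠ 0 := by
      rintro rfl
      have hwv : w = v := by simpa [alternatingWord] using hw
      exact hvj (hwv ▸ hj)
    have hM : M i j = 0 ∨ k + 1 ≤ M i j :=
      or_iff_not_imp_left.2 fun h => lt_of_eq_mul_alternatingWord cs h hw hlen hi
    have hvi := ih _ (by omega) hvi rfl
    have hvj := ih _ (by omega) hvj rfl
    have hS₁ := S_neg_simpleCoroot_nonneg hij hM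
    have hS₀ := S_neg_simpleCoroot_nonneg hij (hM.imp_right (Nat.le_of_succ_le))
    rw [Nat.cast_succ, add_sub_cancel_right] at hS₁
    rw [hw, map_mul, Module.End.mul_apply, geometricRep_alternatingWord]
    split_ifs <;> rw [map_add, map_smul, map_smul]
    · exact add_nonneg (smul_nonneg hS₁ hvi) (smul_nonneg hS₀ hvj)
    · exact add_nonneg (smul_nonneg hS₀ hvi) (smul_nonneg hS₁ hvj)

theorem geometricRep_single_nonpos {w : W} {i : B} (hi : cs.IsRightDescent w i) :
    geometricRep cs w (single i 1) ≤ 0 := by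
  have h := geometricRep_single_nonneg cs (cs.isRightDescent_iff_not_isRightDescent_mul.1 hi)
  rw [map_mul, Module.End.mul_apply, geometricRep_simple, simpleCoroot_single_self,
    show single i (1 : ℝ) - (2 : ℝ) • single i 1 = -single i 1 by module, map_neg] at h
  exact neg_nonneg.1 h

end GeometricRepresentation

/-! ### The fan of chambers -/

section Contragredient

variable {B W : Type*} [Group W] {M : CoxeterMatrix B} (cs : CoxeterSystem M W)

/-- The dual of the geometric representation, in which the Coxeter complex is realized by the
chambers `w • C` and their faces, where `C` is the closed fundamental chamber. -/
noncomputable def contragredient : Representation ℝ W (Module.Dual ℝ (B →₀ ℝ)) :=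
  (geometricRep cs).dual

lemma contragredient_apply (w : W) (x : Module.Dual ℝ (B →₀ ℝ)) (z : B →₀ ℝ) :
    contragredient cs w x z = x (geometricRep cs w⁻¹ z) :=
  rfl

lemma contragredient_simple (i : B) (x : Module.Dual ℝ (B →₀ ℝ)) :
    contragredient cs (cs.simple i) x = x - x (single i 1) • simpleCoroot M i := by
  ext j
  simp [contragredient_apply, geometricRep_simple, -smul_single, mul_comm]

lemma contragredient_eq_self_of_mem_parabolic {x : Module.Dual ℝ (B →₀ ℝ)} {T : Set B}
    (hx : ∀ i ∈ T, x (single i 1) = 0) {w : W} (hw : w ∈ cs.parabolic T) :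
    contragredient cs w x = x := by
  induction hw using Subgroup.closure_induction with
  | mem _ h =>
    obtain ⟨i, hi, rfl⟩ := h
    rw [contragredient_simple, hx i hi, zero_smul, sub_zero]
  | one => rw [map_one, Module.End.one_apply]
  | mul u v _ _ hu hv => rw [map_mul, Module.End.mul_apply, hv, hu]
  | inv u _ hu => simpa using congrArg (contragredient cs u⁻¹) hu.symm

/-- The functional on the span of the simple roots with given values on the simple roots. -/
noncomputable def ofCoords {B : Type*} : (B → ℝ) ≃ₗ[ℝ] Module.Dual ℝ (B →₀ ℝ) :=
  llift ℝ ℝ ℝ B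

lemma ofCoords_single {B : Type*} (c : B → ℝ) (i : B) : ofCoords c (single i 1) = c i := by
  simp [ofCoords]

/-- The closed fundamental chamber of the contragredient representation. -/
def fundamentalChamber (B : Type*) : Set (Module.Dual ℝ (B →₀ ℝ)) :=
  {x | ∀ i, 0 ≤ x (single i 1)}

lemma nonneg_of_mem_fundamentalChamber {x : Module.Dual ℝ (B →₀ ℝ)}
    (hx : x ∈ fundamentalChamber B) {z : B →₀ ℝ} (hz : 0 ≤ z) : 0 ≤ x z := by
  rw [← z.sum_single, map_finsuppSum, Finsupp.sum]
  refine Finset.sum_nonneg fun i _ => ?_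
  rw [← smul_single_one, map_smul]
  exact smul_nonneg (hz i) (hx i)

theorem eq_and_mem_parabolic_of_contragredient_eq {x y : Module.Dual ℝ (B →₀ ℝ)}
    (hx : x ∈ fundamentalChamber B) (hy : y ∈ fundamentalChamber B) {w : W}
    (hw : contragredient cs w x = y) :
    x = y ∧ w ∈ cs.parabolic {i | x (single i 1) = 0} := by
  induction hn : cs.length w using Nat.strong_induction_on generalizing w with
  | _ n ih =>
    subst hn
    rcases eq_or_ne w 1 with rfl | hw₁
    · exact ⟨by simpa using hw, one_mem _⟩
    obtain ⟨i, hi⟩ := cs.exists_rightDescent_of_ne_one hw₁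
    have hxi : x (single i 1) = 0 := by
      have hyx : x (single i 1) = y (geometricRep cs w (single i 1)) := by
        simp [← hw, contragredient_apply]
      refine le_antisymm ?_ (hx i)
      rw [hyx, ← neg_nonneg, ← map_neg]
      exact nonneg_of_mem_fundamentalChamber hy
        (neg_nonneg.2 (geometricRep_single_nonpos cs hi))
    have hwi : contragredient cs (w * cs.simple i) x = y := by
      rw [map_mul, Module.End.mul_apply, contragredient_simple, hxi, zero_smul, sub_zero, hw]
    obtain ⟨hxy, hmem⟩ := ih _ hi hwi rfl
    refine ⟨hxy, ?_⟩
    simpa using mul_mem hmem (Subgroup.subset_closure (mem_image_of_mem cs.simple hxi))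

lemma exists_invariant_bilinForm {G E : Type*} [Group G] [Finite G] [AddCommGroup E] [Module ℝ E]
    [FiniteDimensional ℝ E] (ρ : Representation ℝ G E) :
    ∃ Q : LinearMap.BilinForm ℝ E,
      (∀ g x y, Q (ρ g x) (ρ g y) = Q x y) ∧ ∀ x ≠ 0, 0 < Q x x := by
  have := Fintype.ofFinite G
  let e : E ≃ₗ[ℝ] EuclideanSpace ℝ (Fin (Module.finrank ℝ E)) :=
    LinearEquiv.ofFinrankEq _ _ (by simp)
  refine ⟨∑ g, (innerₗ _).compl₁₂ (e.toLinearMap ∘ₗ ρ g) (e.toLinearMap ∘ₗ ρ g),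
    fun g x y => ?_, fun x hx => ?_⟩
  · simp only [LinearMap.sum_apply, LinearMap.compl₁₂_apply, LinearMap.comp_apply,
      ← Module.End.mul_apply, ← map_mul]
    exact Fintype.sum_equiv (Equiv.mulRight g) _ _ fun _ => rfl
  · simp only [LinearMap.sum_apply, LinearMap.compl₁₂_apply, innerₗ_apply_apply]
    refine Finset.sum_pos' (fun g _ => real_inner_self_nonneg) ⟨1, Finset.mem_univ 1, ?_⟩
    exact real_inner_self_pos.2 (by simpa using hx)

theorem exists_contragredient_mem_fundamentalChamber [Finite B] [Finite W]
    (x : Module.Dual ℝ (B →₀ ℝ)) : ∃ w, contragredient cs w x ∈ fundamentalChamber B := by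
  obtain ⟨Q, hQ, hQpos⟩ := exists_invariant_bilinForm (contragredient cs)
  let y : Module.Dual ℝ (B →₀ ℝ) := ofCoords 1
  -- The chamber vector `y` attains its maximal pairing with the orbit of `x` at a point of the
  -- chamber: a negative coordinate could be reflected away, increasing the pairing.
  obtain ⟨w, hmax⟩ := Finite.exists_max fun w => Q (contragredient cs w x) y
  refine ⟨w, fun i => ?_⟩
  have hcoroot : 0 < Q (simpleCoroot M i) y := by
    have hne : simpleCoroot M i ≠ 0 := fun h => by
      simpa [h] using simpleCoroot_single_self M i
    have hpos := hQpos _ hne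
    have hinv := hQ (cs.simple i) (simpleCoroot M i) y
    simp only [y, contragredient_simple, simpleCoroot_single_self, ofCoords_single, Pi.one_apply,
      map_sub, map_smul, LinearMap.sub_apply, LinearMap.smul_apply, smul_eq_mul] at hinv
    linarith
  have hle := hmax (cs.simple i * w)
  rw [map_mul, Module.End.mul_apply, contragredient_simple, map_sub, map_smul,
    LinearMap.sub_apply, LinearMap.smul_apply, smul_eq_mul] at hle
  exact nonneg_of_mul_nonneg_left (by linarith) hcoroot

end Contragredient

section CosetFan

variable {B W : Type} [Group W] {M : CoxeterMatrix B} (cs : CoxeterSystem M W)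

lemma parabolic_mono {T T' : Set B} (h : T ⊆ T') : cs.parabolic T ≤ cs.parabolic T' :=
  Subgroup.closure_mono (image_mono h)

lemma parabolic_le_parabolic_iff {T T' : Set B} : cs.parabolic T ≤ cs.parabolic T' ↔ T ⊆ T' := by
  refine ⟨fun h i hi => ?_, parabolic_mono cs⟩
  have hx (j) (hj : j ∈ T') : ofCoords (T'ᶜ.indicator 1) (single j 1) = 0 := by
    simp [ofCoords_single, hj]
  have hfix := contragredient_eq_self_of_mem_parabolic cs hx
    (h (Subgroup.subset_closure (mem_image_of_mem _ hi)))
  have hi := LinearMap.congr_fun hfix (single i 1)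
  by_contra hiT'
  simp [contragredient_simple, ofCoords_single, simpleCoroot_single_self, hiT'] at hi

/-- The faces of the chamber `u`, indexed by their sets of vertices: the face with vertex set `A`
is the coset `u W_T` where `T` is the complement of `A`. -/
noncomputable def faceAt (u : W) : {A : Set B // A.Nonempty} ↪o cs.CosetFace :=
  OrderEmbedding.ofMapLEIff
    (fun A => ⟨u • (cs.parabolic A.1ᶜ : Set W), u, A.1ᶜ, compl_ne_univ.2 A.2, rfl⟩) fun _ _ =>
    smul_set_subset_smul_set_iff.trans
      ((parabolic_le_parabolic_iff cs).trans compl_subset_compl)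

lemma mem_range_faceAt_iff {u : W} {X : cs.CosetFace} : X ∈ range (faceAt cs u) ↔ u ∈ X.1 := by
  refine ⟨?_, fun hu => ?_⟩
  · rintro ⟨A, rfl⟩
    exact mem_own_leftCoset (cs.parabolic A.1ᶜ).toSubmonoid u
  · obtain ⟨_, w, T, hT, rfl⟩ := X
    refine ⟨⟨Tᶜ, nonempty_compl.2 hT⟩, Subtype.ext ?_⟩
    change u • (cs.parabolic Tᶜᶜ : Set W) = w • (cs.parabolic T : Set W)
    rw [compl_compl, eq_comm, leftCoset_eq_iff]
    exact (mem_leftCoset_iff w).1 hu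

lemma surjective_faceAt :
    Function.Surjective fun p : W × {A : Set B // A.Nonempty} => faceAt cs p.1 p.2 := by
  rintro ⟨_, w, T, hT, rfl⟩
  obtain ⟨A, hA⟩ :=
    (mem_range_faceAt_iff cs (X := ⟨w • (cs.parabolic T : Set W), w, T, hT, rfl⟩)).2
      (mem_own_leftCoset (cs.parabolic T).toSubmonoid w)
  exact ⟨(w, A), hA⟩

lemma faceAt_eq_faceAt_iff {u u' : W} {A A' : {A : Set B // A.Nonempty}} :
    faceAt cs u A = faceAt cs u' A' ↔ A = A' ∧ u⁻¹ * u' ∈ cs.parabolic A.1ᶜ := by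
  have hcoset : faceAt cs u A = faceAt cs u' A ↔ u⁻¹ * u' ∈ cs.parabolic A.1ᶜ :=
    Subtype.ext_iff.trans (leftCoset_eq_iff _)
  refine ⟨fun h => ?_, fun ⟨hA, hu⟩ => hA ▸ hcoset.2 hu⟩
  have hu' : u' ∈ (faceAt cs u A).1 :=
    (mem_range_faceAt_iff cs).1 (h ▸ mem_range_self A')
  have hu := (mem_leftCoset_iff u).1 hu'
  exact ⟨(faceAt cs u').injective ((hcoset.2 hu).symm.trans h), hu⟩

/-- The ray generator of the fan of chambers that corresponds to the coset `X`: the translate by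
`u` of an indicator vector when `X` is the face of the chamber `u` with vertex set `A`. -/
noncomputable def vertexVector (X : cs.CosetFace) : Module.Dual ℝ (B →₀ ℝ) :=
  let p := Function.surjInv (surjective_faceAt cs) X
  contragredient cs p.1 (ofCoords (indicatorVector p.2))

lemma vertexVector_faceAt (u : W) (A : {A : Set B // A.Nonempty}) :
    vertexVector cs (faceAt cs u A) = contragredient cs u (ofCoords (indicatorVector A)) := by
  obtain ⟨hA, hu⟩ :=
    (faceAt_eq_faceAt_iff cs).1 (Function.surjInv_eq (surjective_faceAt cs) (faceAt cs u A))
  rw [hA] at hu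
  have hx (j) (hj : j ∈ A.1ᶜ) : ofCoords (indicatorVector A) (single j 1) = 0 := by
    simpa [ofCoords_single, indicatorVector] using hj
  have hfix := contragredient_eq_self_of_mem_parabolic cs hx hu
  rw [vertexVector, hA]
  nth_rw 1 [← hfix]
  rw [← Module.End.mul_apply, ← map_mul, mul_inv_cancel_left]

lemma linearCombination_vertexVector_mapDomain (u : W) (ν : {A : Set B // A.Nonempty} →₀ ℝ) :
    linearCombination ℝ (vertexVector cs) (ν.mapDomain (faceAt cs u)) =
      contragredient cs u (ofCoords (linearCombination ℝ indicatorVector ν)) := by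
  have h : vertexVector cs ∘ faceAt cs u =
      (contragredient cs u ∘ₗ ofCoords.toLinearMap) ∘ indicatorVector :=
    funext (vertexVector_faceAt cs u)
  rw [linearCombination_mapDomain, h]
  exact (apply_linearCombination ℝ (contragredient cs u ∘ₗ ofCoords.toLinearMap) _ ν).symm

lemma exists_mapDomain_faceAt_eq {μ : cs.CosetFace →₀ ℝ} (hμ : μ ∈ chainCone cs.CosetFace) :
    ∃ u, ∃ ν ∈ chainCone _, ν.mapDomain (faceAt cs u) = μ := by
  rcases μ.support.eq_empty_or_nonempty with h | h
  · exact ⟨1, 0, ⟨le_rfl, by simp⟩, by simp [support_eq_empty.1 h]⟩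
  · obtain ⟨X, hX, hmax⟩ := μ.support.exists_maximal h
    obtain ⟨⟨u, A⟩, rfl⟩ := surjective_faceAt cs X
    refine ⟨u, exists_mem_chainCone_mapDomain_eq _ hμ fun Y hY => ?_⟩
    refine (mem_range_faceAt_iff cs).2 ?_
    have hYX : Y ≤ faceAt cs u A := (hμ.2.total hY hX).elim id (hmax hY)
    exact hYX ((mem_range_faceAt_iff cs).1 (mem_range_self A))

lemma injOn_linearCombination_vertexVector :
    InjOn (linearCombination ℝ (vertexVector cs)) (chainCone cs.CosetFace) := by
  intro μ hμ μ' hμ' h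
  obtain ⟨u, ν, hν, rfl⟩ := exists_mapDomain_faceAt_eq cs hμ
  obtain ⟨u', ν', hν', rfl⟩ := exists_mapDomain_faceAt_eq cs hμ'
  rw [linearCombination_vertexVector_mapDomain, linearCombination_vertexVector_mapDomain] at h
  set c := linearCombination ℝ indicatorVector ν
  set c' := linearCombination ℝ indicatorVector ν'
  have hcham {ξ : {A : Set B // A.Nonempty} →₀ ℝ} (hξ : 0 ≤ ξ) :
      ofCoords (linearCombination ℝ indicatorVector ξ) ∈ fundamentalChamber B := fun i => by
    rw [ofCoords_single]
    exact linearCombination_indicatorVector_nonneg hξ i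
  have huu' : contragredient cs (u'⁻¹ * u) (ofCoords c) = ofCoords c' := by
    rw [map_mul, Module.End.mul_apply, h, Representation.inv_self_apply]
  obtain ⟨hcc', hmem⟩ := eq_and_mem_parabolic_of_contragredient_eq cs (hcham hν.1)
    (hcham hν'.1) huu'
  obtain rfl : ν = ν' :=
    injOn_linearCombination_indicatorVector hν hν' (ofCoords.injective hcc')
  refine mapDomain_congr fun A hA => (faceAt_eq_faceAt_iff cs).2 ⟨rfl, ?_⟩
  have hsubset : {i | ofCoords c (single i 1) = 0} ⊆ A.1ᶜ := fun i hi hiA =>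
    (linearCombination_indicatorVector_pos hν.1 hA hiA).ne'
      ((ofCoords_single c i).symm.trans hi)
  simpa using inv_mem (parabolic_mono cs hsubset hmem)

theorem isCompleteFan_vertexVector [Finite B] [Finite W] : IsCompleteFan (vertexVector cs) := by
  refine ⟨mapsTo_univ _ _, injOn_linearCombination_vertexVector cs, fun x _ => ?_⟩
  obtain ⟨w, hw⟩ := exists_contragredient_mem_fundamentalChamber cs x
  obtain ⟨c, hc⟩ := ofCoords.surjective (contragredient cs w x)
  have hc_nonneg : 0 ≤ c := fun i => by simpa [← hc, ofCoords_single] using hw i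
  obtain ⟨ν, hν, rfl⟩ := exists_linearCombination_indicatorVector_eq hc_nonneg (toFinite _)
  refine ⟨ν.mapDomain (faceAt cs w⁻¹),
    mapDomain_mem_chainCone (faceAt cs w⁻¹).monotone hν, ?_⟩
  rw [linearCombination_vertexVector_mapDomain, hc, Representation.inv_self_apply]

end CosetFan

end CoxeterComplex

/-- For a finite Coxeter group `W` of rank `n = |S|`, the Coxeter complex
`X_W` is homeomorphic to the `(n-1)`-dimensional sphere. -/
theorem coxeterComplex_homeomorph_sphere {B W : Type} [Fintype B] [Nonempty B] [Group W]
    [Finite W] {M : CoxeterMatrix B} (cs : CoxeterSystem M W) :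
    Nonempty (cs.coxeterComplex ≃ₜ
      Metric.sphere (0 : EuclideanSpace ℝ (Fin (Fintype.card B))) 1) := by
  have : Finite cs.CosetFace := Subtype.finite
  have hfinrank : Module.finrank ℝ (Module.Dual ℝ (B →₀ ℝ)) =
      Module.finrank ℝ (EuclideanSpace ℝ (Fin (Fintype.card B))) := by
    rw [Subspace.dual_finrank_eq, Module.finrank_finsupp_self, finrank_euclideanSpace_fin]
  exact ((CoxeterComplex.isCompleteFan_vertexVector cs).map
    (LinearEquiv.ofFinrankEq _ _ hfinrank)).nonempty_homeomorph_sphere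
end

section
/- If W is an infinite Coxeter group (with finite generating set S), then the Coxeter complex X_W is contractible. -/
open Pointwise CategoryTheory

/-!
Order the chambers `{w}` by length. By the exchange property the right descents `D` of `w` generate
a finite parabolic subgroup, so `D ≠ S` when `W` is infinite and `w W_D` is a face. For `w ≠ 1` the
faces of `w` lying in earlier chambers are those containing `w s` for some `s ∈ D`; they form a cone
with apex `w W_D`, as joining such a face with `w W_D` amounts to intersecting the two cosets. Hence
each new chamber is attached along a cone. These cones assemble into an acyclic matching on the
nonempty chains of faces other than the base chamber, which presents the inclusion of the base
vertex into the nerve as a composite of attachments of horns. A contraction of the realization is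
then a lift of the identity against the fibration of paths starting at the base point, extended one
simplex at a time.
-/

section PathLifting

open unitInterval

variable {X Y : Type*} [TopologicalSpace X] [TopologicalSpace Y]

/-- The part `A × I ∪ Y × {0, 1}` of the cylinder `Y × I`. -/
def cylinderFrame (A : Set Y) : Set (Y × I) := {q | q.1 ∈ A ∨ q.2 = 0 ∨ q.2 = 1}

theorem exists_continuousOn_cylinderFrame {A : Set Y} (hA : IsClosed A) (g : C(A, C(I, X)))
    (p : C(Y, X × X)) (hgp : ∀ x : A, (g x 0, g x 1) = p x) :
    ∃ F : Y × I → X, ContinuousOn F (cylinderFrame A) ∧ (∀ (x : A) (t : I), F (x, t) = g x t) ∧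
      ∀ y, (F (y, 0), F (y, 1)) = p y := by
  classical
  let F : Y × I → X := fun q ↦
    if h : q.1 ∈ A then g ⟨q.1, h⟩ q.2 else if q.2 = 0 then (p q.1).1 else (p q.1).2
  have F_of_mem (x : A) (t : I) : F (x, t) = g x t := dif_pos x.2
  have F_ends (y : Y) : (F (y, 0), F (y, 1)) = p y := by
    by_cases hy : y ∈ A
    · exact .trans (by rw [F_of_mem ⟨y, hy⟩, F_of_mem ⟨y, hy⟩]) (hgp ⟨y, hy⟩)
    · simp [F, hy]
  have F_zero (y : Y) : F (y, 0) = (p y).1 := congrArg Prod.fst (F_ends y)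
  have F_one (y : Y) : F (y, 1) = (p y).2 := congrArg Prod.snd (F_ends y)
  have contOn_sides : ContinuousOn F (Prod.fst ⁻¹' A) := by
    rw [continuousOn_iff_continuous_domRestrict]
    have : Continuous fun q : (Prod.fst ⁻¹' A : Set (Y × I)) ↦ g ⟨q.1.1, q.2⟩ q.1.2 := by fun_prop
    exact this.congr fun q ↦ (F_of_mem ⟨q.1.1, q.2⟩ q.1.2).symm
  have contOn_bottom : ContinuousOn F {q | q.2 = 0} :=
    (show Continuous fun q : Y × I ↦ (p q.1).1 by fun_prop).continuousOn.congr
      (by rintro ⟨y, _⟩ rfl; exact F_zero y)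
  have contOn_top : ContinuousOn F {q | q.2 = 1} :=
    (show Continuous fun q : Y × I ↦ (p q.1).2 by fun_prop).continuousOn.congr
      (by rintro ⟨y, _⟩ rfl; exact F_one y)
  have isClosed_bottom : IsClosed {q : Y × I | q.2 = 0} := isClosed_eq (by fun_prop) (by fun_prop)
  have isClosed_top : IsClosed {q : Y × I | q.2 = 1} := isClosed_eq (by fun_prop) (by fun_prop)
  exact ⟨F, contOn_sides.union_of_isClosed
    (contOn_bottom.union_of_isClosed contOn_top isClosed_bottom isClosed_top)
    (hA.preimage continuous_fst) (isClosed_bottom.union isClosed_top), F_of_mem, F_ends⟩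

theorem exists_path_extension {A : Set Y} (hA : IsClosed A) (r : C(Y × I, Y × I))
    (r_mem : ∀ q, r q ∈ cylinderFrame A) (r_eq : ∀ q ∈ cylinderFrame A, r q = q)
    (g : C(A, C(I, X))) (p : C(Y, X × X)) (hgp : ∀ x : A, (g x 0, g x 1) = p x) :
    ∃ H : C(Y, C(I, X)), (∀ x : A, H x = g x) ∧ ∀ y, (H y 0, H y 1) = p y := by
  obtain ⟨F, hF, F_of_mem, F_ends⟩ := exists_continuousOn_cylinderFrame hA g p hgp
  refine ⟨ContinuousMap.curry ⟨F ∘ r, hF.comp_continuous r.continuous r_mem⟩, fun x ↦ ?_,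
    fun y ↦ ?_⟩
  · ext t
    exact (congrArg F (r_eq _ (.inl x.2))).trans (F_of_mem x t)
  · exact .trans (congrArg₂ (fun q q' ↦ (F q, F q')) (r_eq _ (.inr (.inl rfl)))
      (r_eq _ (.inr (.inr rfl)))) (F_ends y)

end PathLifting

section TopologicalHorn

open unitInterval

variable {ι : Type*} [Fintype ι]

/-- The horn of the topological simplex at the vertex `k`: the union of the faces opposite to the
other vertices. -/
def topHorn (k : ι) : Set (stdSimplex ℝ ι) := {x | ∃ j ≠ k, x j = 0}

theorem isClosed_topHorn (k : ι) : IsClosed (topHorn k) := by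
  have : topHorn k = ⋃ j ∈ {j | j ≠ k}, {x | x j = 0} := by ext x; simp [topHorn]
  rw [this]
  exact (Set.toFinite _).isClosed_biUnion fun j _ ↦
    isClosed_eq ((continuous_apply j).comp continuous_subtype_val) continuous_const

/-- How far a point of the simplex has to be pushed towards the vertex `k`, all other coordinates
decreasing at unit speed, before it hits the horn at `k`. -/
noncomputable def hornDepth (k : ι) (x : stdSimplex ℝ ι) : ℝ := ⨅ j : {j // j ≠ k}, x j

theorem hornDepth_nonneg (k : ι) (x : stdSimplex ℝ ι) : 0 ≤ hornDepth k x :=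
  Real.iInf_nonneg fun j ↦ stdSimplex.zero_le x j

theorem hornDepth_le {k j : ι} (hj : j ≠ k) (x : stdSimplex ℝ ι) : hornDepth k x ≤ x j :=
  ciInf_le (f := fun j : {j // j ≠ k} ↦ x j) (Finite.bddBelow_range _) ⟨j, hj⟩

theorem hornDepth_eq_zero {k : ι} {x : stdSimplex ℝ ι} (hx : x ∈ topHorn k) :
    hornDepth k x = 0 := by
  obtain ⟨j, hj, hxj⟩ := hx
  exact le_antisymm (hxj ▸ hornDepth_le hj x) (hornDepth_nonneg k x)

variable (k : ι)

open Classical in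
/-- The point obtained from `x` by decreasing all coordinates but the `k`-th by `t`, preserving the
sum of the coordinates. -/
noncomputable def pushToVertex (x : ι → ℝ) (t : ℝ) : ι → ℝ :=
  x + t • (Pi.single k (Fintype.card ι : ℝ) - 1)

theorem pushToVertex_apply_of_ne {k j : ι} (hj : j ≠ k) (x : ι → ℝ) (t : ℝ) :
    pushToVertex k x t j = x j - t := by
  simp [pushToVertex, hj, sub_eq_add_neg]

theorem pushToVertex_mem_stdSimplex {x : stdSimplex ℝ ι} {t : ℝ} (ht : 0 ≤ t)
    (htx : t ≤ hornDepth k x) : pushToVertex k x t ∈ stdSimplex ℝ ι := by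
  classical
  refine ⟨fun i ↦ ?_, ?_⟩
  · obtain rfl | hi := eq_or_ne i k
    · have one_le_card : (1 : ℝ) ≤ Fintype.card ι := by exact_mod_cast Fintype.card_pos_iff.2 ⟨i⟩
      have := stdSimplex.zero_le x i
      simpa [pushToVertex] using add_nonneg this (mul_nonneg ht (sub_nonneg.2 one_le_card))
    · rw [pushToVertex_apply_of_ne hi]
      exact sub_nonneg.2 (htx.trans (hornDepth_le hi x))
  · simp [pushToVertex, Finset.sum_add_distrib, ← Finset.mul_sum, stdSimplex.sum_eq_one]

/-- The distance by which `cylinderRetraction` pushes the point `x` at time `τ`. -/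
noncomputable def pushDistance (q : stdSimplex ℝ ι × I) : ℝ :=
  min (hornDepth k q.1) (4 * min (q.2 : ℝ) (1 - q.2))

theorem pushDistance_nonneg (q : stdSimplex ℝ ι × I) : 0 ≤ pushDistance k q :=
  le_min (hornDepth_nonneg k q.1)
    (mul_nonneg zero_le_four (le_min q.2.2.1 (sub_nonneg.2 q.2.2.2)))

variable [Nontrivial ι]

theorem exists_eq_hornDepth (x : stdSimplex ℝ ι) : ∃ j ≠ k, x j = hornDepth k x := by
  have : Nonempty {j // j ≠ k} := nonempty_subtype.2 (exists_ne k)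
  obtain ⟨j, hj⟩ := exists_eq_ciInf_of_finite (f := fun j : {j // j ≠ k} ↦ x j)
  exact ⟨j, j.2, hj⟩

theorem hornDepth_le_one (x : stdSimplex ℝ ι) : hornDepth k x ≤ 1 := by
  obtain ⟨j, -, hj⟩ := exists_eq_hornDepth k x
  exact hj ▸ stdSimplex.le_one x j

@[fun_prop]
theorem continuous_hornDepth : Continuous (hornDepth k) := by
  have : Nonempty {j // j ≠ k} := nonempty_subtype.2 (exists_ne k)
  have : Fintype {j // j ≠ k} := Fintype.ofFinite _
  have depth_eq : hornDepth k = fun x ↦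
      Finset.univ.inf' Finset.univ_nonempty fun j : {j // j ≠ k} ↦ x j :=
    funext fun x ↦ (Finset.inf'_univ_eq_ciInf _).symm
  exact depth_eq ▸ Continuous.finset_inf'_apply _ fun j _ ↦
    (continuous_apply j.1).comp continuous_subtype_val

/-- A retraction of the cylinder over the simplex onto the part over the horn together with the two
ends. Along `{x} × I` it moves `x` into the horn within a quarter of the time, then runs through the
interval over the point reached, and finally moves back; the time it takes to reach the interval
and to leave it shrinks to zero as `x` approaches the horn. -/
noncomputable def cylinderRetraction : C(stdSimplex ℝ ι × I, stdSimplex ℝ ι × I) where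
  toFun q :=
    (⟨pushToVertex k q.1 (pushDistance k q),
      pushToVertex_mem_stdSimplex k (pushDistance_nonneg k q) (min_le_left _ _)⟩,
      Set.projIcc 0 1 zero_le_one ((1 + hornDepth k q.1) * q.2 - hornDepth k q.1 / 2))
  continuous_toFun := by
    refine .prodMk (.subtype_mk ?_ _) (continuous_projIcc.comp (by fun_prop))
    unfold pushToVertex pushDistance
    fun_prop

theorem cylinderRetraction_mem (q : stdSimplex ℝ ι × I) :
    cylinderRetraction k q ∈ cylinderFrame (topHorn k) := by
  obtain ⟨x, τ, hτ⟩ := q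
  obtain ⟨j, hj, hxj⟩ := exists_eq_hornDepth k x
  have depth_le_one := hornDepth_le_one k x
  rcases le_or_gt (hornDepth k x) (4 * min τ (1 - τ)) with h | h
  · refine .inl ⟨j, hj, ?_⟩
    have : pushDistance k (x, ⟨τ, hτ⟩) = hornDepth k x := min_eq_left h
    exact (pushToVertex_apply_of_ne hj _ _).trans (by simp [this, ← hxj])
  rcases min_choice τ (1 - τ) with h' | h' <;> rw [h'] at h
  · exact .inr (.inl (Set.projIcc_of_le_left zero_le_one (by dsimp only; nlinarith [hτ.1])))
  · exact .inr (.inr (Set.projIcc_of_right_le zero_le_one (by dsimp only; nlinarith [hτ.2])))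

theorem cylinderRetraction_eq_self {q : stdSimplex ℝ ι × I}
    (hq : q ∈ cylinderFrame (topHorn k)) : cylinderRetraction k q = q := by
  have distance_eq_zero : pushDistance k q = 0 := by
    refine le_antisymm ?_ (pushDistance_nonneg k q)
    rcases hq with hq | hq | hq
    · exact (min_le_left _ _).trans (hornDepth_eq_zero hq).le
    all_goals exact (min_le_right _ _).trans (by simp [hq])
  refine Prod.ext (Subtype.ext ?_) ?_
  · change pushToVertex k q.1 _ = q.1
    simp [distance_eq_zero, pushToVertex]
  have depth_nonneg := hornDepth_nonneg k q.1
  rcases hq with hq | hq | hq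
  · simp [cylinderRetraction, hornDepth_eq_zero hq]
  · refine (Set.projIcc_of_le_left zero_le_one ?_).trans hq.symm
    simp only [hq, Set.Icc.coe_zero]
    linarith
  · refine (Set.projIcc_of_right_le zero_le_one ?_).trans hq.symm
    simp only [hq, Set.Icc.coe_one]
    linarith

theorem exists_path_extension_topHorn {X : Type*} [TopologicalSpace X]
    (g : C(topHorn k, C(I, X))) (p : C(stdSimplex ℝ ι, X × X))
    (hgp : ∀ x : topHorn k, (g x 0, g x 1) = p x) :
    ∃ H : C(stdSimplex ℝ ι, C(I, X)),
      (∀ x : topHorn k, H x = g x) ∧ ∀ x, (H x 0, H x 1) = p x :=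
  exists_path_extension (isClosed_topHorn k) (cylinderRetraction k) (cylinderRetraction_mem k)
    (fun _ ↦ cylinderRetraction_eq_self k) g p hgp

end TopologicalHorn

section HornFilling

theorem stdSimplex_map_eq_zero {α β : Type*} [Fintype α] [Fintype β] {f : α → β} {b : β}
    (hb : b ∉ Set.range f) (x : stdSimplex ℝ α) : stdSimplex.map f x b = 0 := by
  classical
  rw [stdSimplex.map_coe, FunOnFinite.linearMap_apply_apply]
  refine Finset.sum_eq_zero fun a ha ↦ (hb ⟨a, ?_⟩).elim
  simpa using ha

theorem stdSimplex_map_eq_self {α : Type*} [Fintype α] {f : α → α} {x : stdSimplex ℝ α}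
    (hf : ∀ a, x a ≠ 0 → f a = a) : stdSimplex.map f x = x := by
  classical
  ext b
  rw [stdSimplex.map_coe, FunOnFinite.linearMap_apply_apply]
  trans ∑ a, if a = b then x a else 0
  · rw [Finset.sum_filter]
    refine Finset.sum_congr rfl fun a _ ↦ ?_
    by_cases ha : x a = 0
    · simp [ha]
    · rw [hf a ha]
  · simp

theorem exists_orderHom_retraction {α : Type*} [LinearOrder α] {S : Finset α} (hS : S.Nonempty) :
    ∃ f : α →o α, (∀ a ∈ S, f a = a) ∧ ∀ a, f a ∈ S := by
  let below (a : α) : Finset α := insert (S.min' hS) {b ∈ S | b ≤ a}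
  have below_subset (a : α) : below a ⊆ S :=
    Finset.insert_subset (S.min'_mem hS) (Finset.filter_subset _ _)
  have below_mono {a b : α} (hab : a ≤ b) : below a ⊆ below b :=
    Finset.insert_subset_insert _ (Finset.monotone_filter_right _ fun _ _ h ↦ h.trans hab)
  have below_nonempty (a : α) : (below a).Nonempty := Finset.insert_nonempty _ _
  refine ⟨⟨fun a ↦ (below a).max' (below_nonempty a), fun a b hab ↦
    Finset.max'_subset _ (below_mono hab)⟩, fun a ha ↦ ?_,
    fun a ↦ below_subset a (Finset.max'_mem _ (below_nonempty a))⟩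
  refine le_antisymm (Finset.max'_le _ (below_nonempty a) _ fun b hb ↦ ?_)
    (Finset.le_max' _ _ ?_)
  · obtain rfl | hb := Finset.mem_insert.1 hb
    · exact S.min'_le a ha
    · exact (Finset.mem_filter.1 hb).2
  · simp [below, ha]

theorem exists_continuousMap_of_closed_cover {ι Z Y : Type*} [Finite ι] [TopologicalSpace Z]
    [TopologicalSpace Y] {A : ι → Set Z} (isClosed : ∀ i, IsClosed (A i))
    (cover : ⋃ i, A i = Set.univ) (G : ∀ i, C(A i, Y))
    (agree : ∀ i j x (hi : x ∈ A i) (hj : x ∈ A j), G i ⟨x, hi⟩ = G j ⟨x, hj⟩) :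
    ∃ g : C(Z, Y), ∀ i (x : A i), g x = G i x := by
  let g : Z → Y := Set.liftCover A (fun i ↦ G i) agree cover
  have g_eq (i : ι) (x : A i) : g x = G i x := Set.liftCover_coe _
  refine ⟨⟨g, (locallyFinite_of_finite A).continuous cover isClosed fun i ↦ ?_⟩, g_eq⟩
  rw [continuousOn_iff_continuous_domRestrict]
  exact (G i).continuous.congr fun x ↦ (g_eq i x).symm

open Simplicial Opposite unitInterval

universe u

variable {Y : TopCat.{u}} {n : ℕ} {k : Fin (n + 2)}

theorem objEquiv_symm_mem_horn {m : ℕ} {φ : ⦋m⦌ ⟶ ⦋n + 1⦌} {j : Fin (n + 2)} (hj : j ≠ k)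
    (hφ : j ∉ Set.range φ) :
    SSet.stdSimplex.objEquiv.symm φ ∈ (SSet.horn.{u} (n + 1) k).obj (op ⦋m⦌) :=
  (SSet.mem_horn_iff_notMem_range _ _).2 ⟨j, hj, hφ⟩

/-- The continuous map to which `f` sends the simplex `φ` of the horn. -/
noncomputable def hornEval (f : (SSet.horn.{u} (n + 1) k : SSet) ⟶ TopCat.toSSet.obj Y) {m : ℕ}
    (φ : ⦋m⦌ ⟶ ⦋n + 1⦌)
    (hφ : SSet.stdSimplex.objEquiv.symm φ ∈ (SSet.horn.{u} (n + 1) k).obj (op ⦋m⦌)) :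
    C(stdSimplex ℝ (Fin (m + 1)), Y) :=
  TopCat.toSSetObjEquiv Y (op ⦋m⦌) (f.app (op ⦋m⦌) ⟨SSet.stdSimplex.objEquiv.symm φ, hφ⟩)

variable (f : (SSet.horn.{u} (n + 1) k : SSet) ⟶ TopCat.toSSet.obj Y)

theorem hornEval_comp {m m' : ℕ} (ψ : ⦋m'⦌ ⟶ ⦋m⦌) (φ : ⦋m⦌ ⟶ ⦋n + 1⦌) (hφ hψφ)
    (y : stdSimplex ℝ (Fin (m' + 1))) :
    hornEval f (ψ ≫ φ) hψφ y = hornEval f φ hφ (stdSimplex.map ψ y) := by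
  have naturality := ConcreteCategory.congr_hom (f.naturality ψ.op)
    (⟨SSet.stdSimplex.objEquiv.symm φ, hφ⟩ : (SSet.horn.{u} (n + 1) k).toSSet.obj (op ⦋m⦌))
  exact DFunLike.congr_fun (congrArg (Y.toSSetObjEquiv (op ⦋m'⦌)) naturality) y

theorem hornEval_eq_of_comp_eq {m : ℕ} {ψ : ⦋n + 1⦌ ⟶ ⦋n + 1⦌} {φ : ⦋m⦌ ⟶ ⦋n + 1⦌} (h : φ ≫ ψ = φ)
    (hφ hψ) (y : stdSimplex ℝ (Fin (m + 1))) :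
    hornEval f φ hφ y = hornEval f ψ hψ (stdSimplex.map φ y) := by
  rw [← hornEval_comp f φ ψ hψ (h.symm ▸ hφ)]
  simp only [h]

theorem exists_collapse_face (j : Fin (n + 2)) :
    ∃ κ : ⦋n + 1⦌ ⟶ ⦋n + 1⦌, j ∉ Set.range κ ∧ ∀ a ≠ j, κ a = a := by
  obtain ⟨a, ha⟩ := exists_ne j
  obtain ⟨κ, κ_eq, κ_mem⟩ := exists_orderHom_retraction (S := {j}ᶜ) ⟨a, by simpa using ha⟩
  refine ⟨SimplexCategory.Hom.mk κ, ?_, fun a ha ↦ κ_eq a (by simpa using ha)⟩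
  rintro ⟨a, ha⟩
  exact Finset.mem_compl.1 (κ_mem a) (Finset.mem_singleton.2 ha)

theorem exists_collapse_support (x : stdSimplex ℝ (Fin (n + 2))) :
    ∃ κ : ⦋n + 1⦌ ⟶ ⦋n + 1⦌, (∀ j, x j = 0 → j ∉ Set.range κ) ∧ stdSimplex.map κ x = x := by
  have support_nonempty : (Finset.univ.filter fun a ↦ x a ≠ 0).Nonempty := by
    obtain ⟨a, -, ha⟩ := Finset.exists_ne_zero_of_sum_ne_zero
      ((stdSimplex.sum_eq_one x).trans_ne one_ne_zero)
    exact ⟨a, by simpa using ha⟩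
  obtain ⟨κ, κ_eq, κ_mem⟩ := exists_orderHom_retraction support_nonempty
  refine ⟨SimplexCategory.Hom.mk κ, ?_,
    stdSimplex_map_eq_self fun a ha ↦ κ_eq a (by simpa using ha)⟩
  rintro j hj ⟨a, rfl⟩
  exact (Finset.mem_filter.1 (κ_mem a)).2 hj

theorem exists_topHorn_realization :
    ∃ g : C(topHorn k, Y), ∀ {m : ℕ} (φ : ⦋m⦌ ⟶ ⦋n + 1⦌) (hφ) (y) (hy),
      hornEval f φ hφ y = g ⟨stdSimplex.map φ y, hy⟩ := by
  choose κ κ_miss κ_eq using exists_collapse_face (n := n)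
  let face (j : {j // j ≠ k}) : Set (topHorn k) := {x | x.1 j.1 = 0}
  have isClosed_face (j) : IsClosed (face j) :=
    isClosed_eq ((continuous_apply j.1).comp
      (continuous_subtype_val.comp continuous_subtype_val)) continuous_const
  have cover : ⋃ j, face j = Set.univ := by
    refine Set.iUnion_eq_univ_iff.2 fun ⟨x, j, hj, hxj⟩ ↦ ⟨⟨j, hj⟩, hxj⟩
  let onFace (j : {j // j ≠ k}) : C(stdSimplex ℝ (Fin (n + 2)), Y) :=
    hornEval f (κ j) (objEquiv_symm_mem_horn j.2 (κ_miss j))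
  have eq_onFace {m : ℕ} (φ : ⦋m⦌ ⟶ ⦋n + 1⦌) (hφ y) (j : {j // j ≠ k}) (hj : j.1 ∉ Set.range φ) :
      hornEval f φ hφ y = onFace j (stdSimplex.map φ y) := by
    refine hornEval_eq_of_comp_eq f ?_ _ _ y
    ext a : 3
    exact κ_eq j _ fun h ↦ hj ⟨a, h⟩
  obtain ⟨g, hg⟩ := exists_continuousMap_of_closed_cover isClosed_face cover
    (fun j ↦ (onFace j).comp ⟨fun x ↦ x.1.1, by fun_prop⟩) fun i j x hi hj ↦ by
      obtain ⟨ρ, ρ_miss, ρ_eq⟩ := exists_collapse_support x.1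
      have hρ := objEquiv_symm_mem_horn i.2 (ρ_miss i hi)
      have := (eq_onFace ρ hρ x i (ρ_miss i hi)).symm.trans (eq_onFace ρ hρ x j (ρ_miss j hj))
      rwa [ρ_eq] at this
  refine ⟨g, fun φ hφ y hy ↦ ?_⟩
  obtain ⟨j, hj, φ_miss⟩ := (SSet.mem_horn_iff_notMem_range _ _).1 hφ
  exact (eq_onFace φ hφ y ⟨j, hj⟩ φ_miss).trans
    (hg ⟨j, hj⟩ ⟨⟨_, hy⟩, stdSimplex_map_eq_zero φ_miss y⟩).symm

theorem toSSetObjEquiv_app_objEquiv_symm {m n : ℕ} (b : Δ[n] ⟶ TopCat.toSSet.obj Y)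
    (φ : ⦋m⦌ ⟶ ⦋n⦌) (y : stdSimplex ℝ (Fin (m + 1))) :
    Y.toSSetObjEquiv (op ⦋m⦌) (b.app (op ⦋m⦌) (SSet.stdSimplex.objEquiv.symm φ)) y =
      Y.toSSetObjEquiv (op ⦋n⦌) (SSet.yonedaEquiv b) (stdSimplex.map φ y) := by
  have naturality := ConcreteCategory.congr_hom (b.naturality φ.op)
    (SSet.stdSimplex.objEquiv.symm (𝟙 ⦋n⦌))
  refine .trans ?_ (DFunLike.congr_fun (congrArg (Y.toSSetObjEquiv (op ⦋m⦌)) naturality) y)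
  exact congrArg (fun φ ↦ Y.toSSetObjEquiv (op ⦋m⦌) (b.app _ (SSet.stdSimplex.objEquiv.symm φ)) y)
    (Category.comp_id φ).symm

/-- The path fibration of `X`, sending a path to its two endpoints. -/
noncomputable def pathEndpoints (X : TopCat.{u}) : TopCat.of C(I, X) ⟶ TopCat.of (X × X) :=
  TopCat.ofHom ⟨fun γ ↦ (γ 0, γ 1), by fun_prop⟩

theorem hornEval_endpoints {X : TopCat.{u}}
    {f : (SSet.horn.{u} (n + 1) k : SSet) ⟶ TopCat.toSSet.obj (TopCat.of C(I, X))}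
    {b : Δ[n + 1] ⟶ TopCat.toSSet.obj (TopCat.of (X × X))}
    (sq : CommSq f (SSet.horn.{u} (n + 1) k).ι (TopCat.toSSet.map (pathEndpoints X)) b) {m : ℕ}
    (φ : ⦋m⦌ ⟶ ⦋n + 1⦌) (hφ) (y : stdSimplex ℝ (Fin (m + 1))) :
    (hornEval f φ hφ y 0, hornEval f φ hφ y 1) =
      TopCat.toSSetObjEquiv _ (op ⦋n + 1⦌) (SSet.yonedaEquiv b) (stdSimplex.map φ y) := by
  have comm := ConcreteCategory.congr_hom (NatTrans.congr_app sq.w (op ⦋m⦌)) ⟨_, hφ⟩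
  rw [← toSSetObjEquiv_app_objEquiv_symm]
  exact DFunLike.congr_fun (congrArg (TopCat.toSSetObjEquiv _ (op ⦋m⦌)) comm) y

theorem hasLiftingProperty_horn_pathEndpoints (X : TopCat.{u}) (n : ℕ) (k : Fin (n + 2)) :
    HasLiftingProperty (SSet.horn.{u} (n + 1) k).ι (TopCat.toSSet.map (pathEndpoints X)) := by
  refine ⟨fun {f b} sq ↦ ?_⟩
  obtain ⟨g, hg⟩ := exists_topHorn_realization f
  let p := TopCat.toSSetObjEquiv _ (op ⦋n + 1⦌) (SSet.yonedaEquiv b)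
  obtain ⟨H, H_eq, H_ends⟩ := exists_path_extension_topHorn k g p fun ⟨x, hx⟩ ↦ by
    obtain ⟨ρ, ρ_miss, ρ_eq⟩ := exists_collapse_support x
    obtain ⟨j, hj, hxj⟩ := hx
    have hρ := objEquiv_symm_mem_horn hj (ρ_miss j hxj)
    have ends := hornEval_endpoints sq ρ hρ x
    simp only [hg ρ hρ x (ρ_eq.symm ▸ ⟨j, hj, hxj⟩), ρ_eq] at ends
    exact ends
  let lift := SSet.yonedaEquiv.symm ((TopCat.toSSetObjEquiv (.of C(I, X)) (op ⦋n + 1⦌)).symm H)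
  have eval_lift : TopCat.toSSetObjEquiv _ (op ⦋n + 1⦌) (SSet.yonedaEquiv lift) = H := by
    simp only [lift, Equiv.apply_symm_apply]
  refine ⟨⟨⟨lift, ?_, ?_⟩⟩⟩
  · ext ⟨m⟩ ⟨s, hs⟩
    induction m using SimplexCategory.rec with | _ m
    obtain ⟨φ, rfl⟩ := SSet.stdSimplex.objEquiv.symm.surjective s
    refine (TopCat.toSSetObjEquiv _ (op ⦋m⦌)).injective (ContinuousMap.ext fun y ↦ ?_)
    obtain ⟨j, hj, φ_miss⟩ := (SSet.mem_horn_iff_notMem_range _ _).1 hs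
    have hy : stdSimplex.map φ y ∈ topHorn k := ⟨j, hj, stdSimplex_map_eq_zero φ_miss y⟩
    exact (toSSetObjEquiv_app_objEquiv_symm lift φ y).trans <| by
      rw [eval_lift]
      exact (H_eq ⟨_, hy⟩).trans (hg φ hs y hy).symm
  · apply SSet.yonedaEquiv.injective
    refine (TopCat.toSSetObjEquiv _ (op ⦋n + 1⦌)).injective (ContinuousMap.ext fun y ↦ ?_)
    rw [SSet.yonedaEquiv_comp]
    exact .trans (by rw [← eval_lift]; rfl) (H_ends y)

theorem rlp_pathEndpoints (X : TopCat.{u}) :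
    SSet.modelCategoryQuillen.J.{u}.rlp (TopCat.toSSet.map (pathEndpoints X)) := by
  rintro _ _ _ hi
  simp only [SSet.modelCategoryQuillen.J, MorphismProperty.iSup_iff] at hi
  obtain ⟨n, ⟨k⟩⟩ := hi
  exact hasLiftingProperty_horn_pathEndpoints _ n k

theorem contractibleSpace_toTop_of_anodyneExtensions {K : SSet.{u}} {x : Δ[0] ⟶ K}
    (hx : SSet.anodyneExtensions x) : ContractibleSpace (SSet.toTop.obj K) := by
  let X := SSet.toTop.obj K
  let pt : X := SSet.toTop.map x default
  let constPath : X ⟶ TopCat.of C(I, X) := TopCat.ofHom ⟨.const I, ContinuousMap.continuous_const'⟩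
  let pairWithPt : X ⟶ TopCat.of (X × X) := TopCat.ofHom ⟨fun y ↦ (y, pt), by fun_prop⟩
  have : HasLiftingProperty (SSet.toTop.map x) (pathEndpoints X) := by
    rw [sSetTopAdj.hasLiftingProperty_iff]
    rw [SSet.anodyneExtensions_eq_llp_rlp] at hx
    exact hx _ (rlp_pathEndpoints X)
  have sq : CommSq (SSet.toTop.map x ≫ constPath) (SSet.toTop.map x) (pathEndpoints X)
      pairWithPt := by
    refine ⟨TopCat.hom_ext (ContinuousMap.ext fun q ↦ ?_)⟩
    rw [Unique.eq_default q]
    rfl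
  have lift_ends (y : X) : (sq.lift y 0, sq.lift y 1) = (y, pt) :=
    ConcreteCategory.congr_hom sq.fac_right y
  rw [contractible_iff_id_nullhomotopic]
  exact ⟨pt, ⟨⟨(ContinuousMap.uncurry sq.lift.hom).comp .prodSwap, fun y ↦
    congrArg Prod.fst (lift_ends y), fun y ↦ congrArg Prod.snd (lift_ends y)⟩⟩⟩

end HornFilling

section Nerve

open Simplicial

universe u

variable {P : Type u} [PartialOrder P]

theorem strictMono_obj_simplex (x : (nerve P).N) : StrictMono x.simplex.obj :=
  (PartialOrder.mem_nerve_nonDegenerate_iff_strictMono _).1 x.nonDegenerate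

/-- The vertex of the nerve given by an element of `P`. -/
noncomputable def nerveVertex (p₀ : P) : Δ[0] ⟶ nerve P :=
  SSet.yonedaEquiv.symm (monotone_const (c := p₀)).functor

/-- Finite chains spanning a simplex of the order complex of `P` other than the base vertex. -/
structure IsNonbaseChain (p₀ : P) (σ : Finset P) : Prop where
  nonempty : σ.Nonempty
  isChain : IsChain (· ≤ ·) (σ : Set P)
  ne_base : σ ≠ {p₀}

variable [DecidableEq P]

/-- The finite chain of `P` formed by the vertices of a nondegenerate simplex of the nerve. -/
noncomputable def nerveChain (x : (nerve P).N) : Finset P := Finset.univ.image x.simplex.obj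

theorem mem_nerveChain {x : (nerve P).N} {p : P} : p ∈ nerveChain x ↔ ∃ i, x.simplex.obj i = p := by
  simp [nerveChain]

theorem card_nerveChain (x : (nerve P).N) : (nerveChain x).card = x.dim + 1 := by
  rw [nerveChain, Finset.card_image_of_injective _ (strictMono_obj_simplex x).injective]
  exact Finset.card_fin _

theorem nonempty_nerveChain (x : (nerve P).N) : (nerveChain x).Nonempty :=
  Finset.univ_nonempty.image _

theorem isChain_nerveChain (x : (nerve P).N) : IsChain (· ≤ ·) (nerveChain x : Set P) := by
  rw [nerveChain, Finset.coe_image, Finset.coe_univ, Set.image_univ]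
  exact (strictMono_obj_simplex x).monotone.isChain_range

theorem nerveChain_subset_nerveChain {x y : (nerve P).N} :
    nerveChain x ⊆ nerveChain y ↔ x ≤ y := by
  rw [SSet.N.le_iff_exists_mono]
  constructor
  · intro hxy
    have vertices_subset (i) : ∃ j, y.simplex.obj j = x.simplex.obj i :=
      mem_nerveChain.1 (hxy (mem_nerveChain.2 ⟨i, rfl⟩))
    choose f hf using vertices_subset
    have strictMono_f : StrictMono f := fun i j hij ↦ by
      rw [← (strictMono_obj_simplex y).lt_iff_lt, hf, hf]
      exact strictMono_obj_simplex x hij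
    refine ⟨SimplexCategory.Hom.mk ⟨f, strictMono_f.monotone⟩, ?_, ?_⟩
    · exact SimplexCategory.mono_iff_injective.2 strictMono_f.injective
    · ext i
      exact hf i
  · rintro ⟨f, _, hf⟩ p hp
    obtain ⟨i, rfl⟩ := mem_nerveChain.1 hp
    exact mem_nerveChain.2 ⟨f i, by rw [← hf]; rfl⟩

theorem nerveChain_injective : Function.Injective (nerveChain (P := P)) := fun _ _ h ↦
  le_antisymm (nerveChain_subset_nerveChain.1 h.subset) (nerveChain_subset_nerveChain.1 h.superset)

theorem exists_nerveChain_eq {σ : Finset P} (nonempty : σ.Nonempty)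
    (isChain : IsChain (· ≤ ·) (σ : Set P)) : ∃ x : (nerve P).N, nerveChain x = σ := by
  obtain ⟨n, hn⟩ := Nat.exists_eq_add_one_of_ne_zero nonempty.card_ne_zero
  let _ : LinearOrder σ :=
    { (inferInstance : PartialOrder σ) with
      le_total a b := isChain.total a.2 b.2
      toDecidableLE := Classical.decRel _ }
  let e : Fin (n + 1) ≃o σ := Fintype.orderIsoFinOfCardEq σ (by simpa using hn)
  have strictMono_e : StrictMono fun i ↦ (e i : P) := fun i j hij ↦ e.strictMono hij
  refine ⟨SSet.N.mk strictMono_e.monotone.functor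
    ((PartialOrder.mem_nerve_nonDegenerate_iff_strictMono _).2 strictMono_e), ?_⟩
  ext p
  rw [mem_nerveChain]
  exact ⟨by rintro ⟨i, rfl⟩; exact (e i).2,
    fun hp ↦ ⟨e.symm ⟨p, hp⟩, congrArg Subtype.val (e.apply_symm_apply ⟨p, hp⟩)⟩⟩

theorem isUniquelyCodimOneFace_of_nerveChain_subset {x y : (nerve P).N}
    (hxy : nerveChain x ⊆ nerveChain y) (card : (nerveChain y).card = (nerveChain x).card + 1) :
    SSet.S.IsUniquelyCodimOneFace x.toS y.toS := by
  rw [card_nerveChain, card_nerveChain, Nat.add_right_cancel_iff] at card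
  obtain ⟨f, hf, hfx⟩ := SSet.N.le_iff_exists_mono.1 (nerveChain_subset_nerveChain.1 hxy)
  refine ⟨card, f, ⟨hf, hfx⟩, fun g ⟨_, hgx⟩ ↦ ?_⟩
  ext i : 3
  exact (strictMono_obj_simplex y).injective
    (congrArg (fun s : (nerve P) _⦋x.dim⦌ ↦ s.obj i) (hgx.trans hfx.symm))

theorem simplex_mem_range_nerveVertex {p₀ : P} {x : (nerve P).N} :
    x.simplex ∈ (SSet.Subcomplex.range (nerveVertex p₀)).obj _ ↔ nerveChain x = {p₀} := by
  constructor
  · rintro ⟨s, hs⟩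
    rw [nerveChain, ← hs]
    exact Finset.image_const Finset.univ_nonempty p₀
  · intro hx
    refine ⟨SSet.stdSimplex.objEquiv.symm (SimplexCategory.const _ _ 0), ?_⟩
    ext i
    have : x.simplex.obj i ∈ nerveChain x := mem_nerveChain.2 ⟨i, rfl⟩
    rw [hx, Finset.mem_singleton] at this
    exact this.symm

/-- The nondegenerate simplices of the nerve other than the base vertex, as finite chains. -/
noncomputable def nonbaseSimplexEquiv (p₀ : P) :
    (SSet.Subcomplex.range (nerveVertex p₀)).N ≃ {σ // IsNonbaseChain p₀ σ} :=
  Equiv.ofBijective (fun x ↦ ⟨nerveChain x.toN, nonempty_nerveChain _, isChain_nerveChain _,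
    fun h ↦ x.notMem (simplex_mem_range_nerveVertex.2 h)⟩) <| by
  refine ⟨fun x y hxy ↦ ?_, fun ⟨σ, hσ⟩ ↦ ?_⟩
  · exact (SSet.Subcomplex.N.ext_iff _ _).2 (nerveChain_injective (congrArg Subtype.val hxy))
  · obtain ⟨x, rfl⟩ := exists_nerveChain_eq hσ.nonempty hσ.isChain
    exact ⟨.mk' x fun h ↦ hσ.ne_base (simplex_mem_range_nerveVertex.1 h), rfl⟩

/-- An acyclic matching on the finite chains of `P` other than the base vertex `{p₀}`: every chain
is matched with the chain obtained from it by adding or removing the element `toggle σ`. Acyclicity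
is witnessed by `rank`, which decreases along the gradient paths: go up from an unsaturated chain
`σ` to its partner, then down to another unsaturated chain by dropping some `z ∈ σ`. -/
structure ChainMatching (p₀ : P) (α : Type*) [LT α] where
  toggle : Finset P → P
  rank : Finset P → α
  comparable {σ : Finset P} : IsNonbaseChain p₀ σ → ∀ a ∈ σ, toggle σ ≤ a ∨ a ≤ toggle σ
  toggle_insert {σ : Finset P} : IsNonbaseChain p₀ σ → toggle σ ∉ σ →
    toggle (insert (toggle σ) σ) = toggle σ
  isNonbaseChain_erase {σ : Finset P} : IsNonbaseChain p₀ σ → toggle σ ∈ σ →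
    IsNonbaseChain p₀ (σ.erase (toggle σ))
  toggle_erase {σ : Finset P} : IsNonbaseChain p₀ σ → toggle σ ∈ σ →
    toggle (σ.erase (toggle σ)) = toggle σ
  rank_lt {σ τ : Finset P} {z : P} : IsNonbaseChain p₀ σ → toggle σ ∉ σ → z ∈ σ →
    τ = insert (toggle σ) (σ.erase z) → IsNonbaseChain p₀ τ → toggle τ ∉ τ → rank τ < rank σ

namespace ChainMatching

variable {p₀ : P} {α : Type*}

section LT

variable [LT α] (m : ChainMatching p₀ α)

theorem isNonbaseChain_insert {σ : Finset P} (hσ : IsNonbaseChain p₀ σ) (h : m.toggle σ ∉ σ) :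
    IsNonbaseChain p₀ (insert (m.toggle σ) σ) where
  nonempty := Finset.insert_nonempty _ _
  isChain := by
    rw [Finset.coe_insert]
    exact hσ.isChain.insert fun a ha _ ↦ m.comparable hσ a ha
  ne_base hbase := by
    have := congrArg Finset.card hbase
    rw [Finset.card_insert_of_notMem h, Finset.card_singleton, Nat.add_eq_right] at this
    exact hσ.nonempty.card_ne_zero this

/-- The bijection between unsaturated and saturated chains given by a matching. -/
noncomputable def insertEquiv :
    {σ : {σ // IsNonbaseChain p₀ σ} // m.toggle σ.1 ∉ σ.1} ≃
      {σ : {σ // IsNonbaseChain p₀ σ} // ¬ m.toggle σ.1 ∉ σ.1} where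
  toFun σ := ⟨⟨insert (m.toggle σ.1.1) σ.1.1, m.isNonbaseChain_insert σ.1.2 σ.2⟩, by
    rw [m.toggle_insert σ.1.2 σ.2, not_not]
    exact Finset.mem_insert_self _ _⟩
  invFun σ := ⟨⟨σ.1.1.erase (m.toggle σ.1.1), m.isNonbaseChain_erase σ.1.2 (not_not.1 σ.2)⟩, by
    rw [m.toggle_erase σ.1.2 (not_not.1 σ.2)]
    exact Finset.notMem_erase _ _⟩
  left_inv σ := Subtype.ext <| Subtype.ext <| by
    dsimp only
    rw [m.toggle_insert σ.1.2 σ.2, Finset.erase_insert σ.2]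
  right_inv σ := Subtype.ext <| Subtype.ext <| by
    dsimp only
    rw [m.toggle_erase σ.1.2 (not_not.1 σ.2), Finset.insert_erase (not_not.1 σ.2)]

/-- The pairing of simplices of the nerve corresponding to a matching of chains. -/
noncomputable def pairing : (SSet.Subcomplex.range (nerveVertex p₀)).Pairing where
  I := {x | ¬ m.toggle (nerveChain x.toN) ∉ nerveChain x.toN}
  II := {x | m.toggle (nerveChain x.toN) ∉ nerveChain x.toN}
  inter := Set.compl_inter_self _
  union := Set.compl_union_self _
  p := ((nonbaseSimplexEquiv p₀).subtypeEquiv fun _ ↦ Iff.rfl).trans <|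
    m.insertEquiv.trans ((nonbaseSimplexEquiv p₀).subtypeEquiv fun _ ↦ Iff.rfl).symm

theorem nerveChain_pairing (x : m.pairing.II) :
    nerveChain (m.pairing.p x).1.toN =
      insert (m.toggle (nerveChain x.1.toN)) (nerveChain x.1.toN) :=
  congrArg Subtype.val ((nonbaseSimplexEquiv p₀).apply_symm_apply _)

instance : m.pairing.IsProper where
  isUniquelyCodimOneFace x := by
    apply isUniquelyCodimOneFace_of_nerveChain_subset <;> rw [nerveChain_pairing]
    · exact Finset.subset_insert _ _
    · exact Finset.card_insert_of_notMem x.2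

theorem exists_nerveChain_eq_insert_erase {x y : m.pairing.II} (hxy : m.pairing.AncestralRel x y)
    (dim_eq : x.1.dim = y.1.dim) :
    ∃ z ∈ nerveChain y.1.toN, nerveChain x.1.toN =
      insert (m.toggle (nerveChain y.1.toN)) ((nerveChain y.1.toN).erase z) := by
  have hle := nerveChain_subset_nerveChain.2 (SSet.Subcomplex.N.lt_iff.1 hxy.2).le
  rw [nerveChain_pairing] at hle
  have card_eq : (nerveChain x.1.toN).card = (nerveChain y.1.toN).card := by
    rw [card_nerveChain, card_nerveChain, dim_eq]
  obtain ⟨z, hz, hxz⟩ := Finset.covBy_iff_exists_erase.1 <|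
    Finset.covBy_iff_card_sdiff_eq_one.2 ⟨hle, by
      rw [Finset.card_sdiff_of_subset hle, Finset.card_insert_of_notMem y.2, card_eq,
        Nat.add_sub_cancel_left]⟩
  have hz_ne : z ≠ m.toggle (nerveChain y.1.toN) := by
    rintro rfl
    rw [Finset.erase_insert y.2] at hxz
    exact hxy.1 (Subtype.ext ((SSet.Subcomplex.N.ext_iff _ _).2 (nerveChain_injective hxz.symm)))
  exact ⟨z, Finset.mem_of_mem_insert_of_ne hz hz_ne,
    by rw [← hxz, Finset.erase_insert_of_ne hz_ne.symm]⟩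

end LT

variable [PartialOrder α]

/-- The rank of a matching, as a weak rank function on the corresponding pairing. -/
noncomputable def weakRankFunction (m : ChainMatching p₀ α) : m.pairing.WeakRankFunction α where
  rank x := m.rank (nerveChain x.1.toN)
  lt {x y} hxy dim_eq := by
    obtain ⟨z, hz, hxz⟩ := m.exists_nerveChain_eq_insert_erase hxy dim_eq
    exact m.rank_lt (nonbaseSimplexEquiv p₀ y.1).2 y.2 hz hxz (nonbaseSimplexEquiv p₀ x.1).2 x.2

theorem contractibleSpace_nerve [WellFoundedLT α] (m : ChainMatching p₀ α) :
    ContractibleSpace (SSet.toTop.obj (nerve P)) := by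
  have : m.pairing.IsRegular := m.weakRankFunction.isRegular
  apply contractibleSpace_toTop_of_anodyneExtensions (x := nerveVertex p₀)
  apply SSet.strongAnodyneExtensions_le_anodyneExtensions
  exact ⟨SSet.stdSimplex.isTerminalObj₀.mono_from _, m.pairing, inferInstance⟩

end ChainMatching

end Nerve

section ConicalShelling

universe u

/-- A well-founded shelling of the face poset `P` of a complex whose chambers are indexed by `W`:
`first C` is the earliest chamber containing the face `C`, and every chamber `w` other than the base
chamber meets the earlier ones in a cone with apex `cone w`, that is, the faces of `w` lying in an
earlier chamber are closed under joining with `cone w`. The order in which the chambers are attached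
is given by `height`. -/
structure ConicalShelling (P : Type u) [PartialOrder P] (W α : Type*) [Preorder α] where
  chamber : W → P
  first : P → W
  height : W → α
  base : W
  cone : W → P
  le_chamber_first (C : P) : C ≤ chamber (first C)
  first_chamber (w : W) : first (chamber w) = w
  height_first_lt {C : P} {w : W} : C ≤ chamber w → first C ≠ w → height (first C) < height w
  first_eq_base {C : P} : C ≤ chamber base → first C = base
  cone_le_chamber (w : W) : cone w ≤ chamber w
  first_cone_ne {w : W} : w ≠ base → first (cone w) ≠ w
  exists_join {C : P} {w : W} : C ≤ chamber w → first C ≠ w →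
    ∃ J, IsLUB {cone w, C} J ∧ first J ≠ w

theorem exists_isGreatest_of_isChain {P : Type*} [Preorder P] {σ : Finset P}
    (nonempty : σ.Nonempty) (isChain : IsChain (· ≤ ·) (σ : Set P)) :
    ∃ G, IsGreatest (σ : Set P) G := by
  obtain ⟨G, hG⟩ := σ.exists_maximal nonempty
  exact ⟨G, hG.1, fun C hC ↦ (isChain.total hC hG.1).elim id (hG.2 hC)⟩

namespace ConicalShelling

variable {P : Type u} [PartialOrder P] {W α : Type*} [Preorder α] (s : ConicalShelling P W α)

theorem first_eq_first {C D : P} (hCD : C ≤ D) (hD : D ≤ s.chamber (s.first C)) :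
    s.first D = s.first C := by
  by_contra hne
  have := s.height_first_lt (hCD.trans (s.le_chamber_first D)) (Ne.symm hne)
  exact this.asymm (s.height_first_lt hD hne)

/-- The earliest chamber containing the largest element of the chain `σ`. -/
noncomputable def lead (σ : Finset P) : W :=
  s.first (Classical.epsilon (h := ⟨s.chamber s.base⟩) (IsGreatest (σ : Set P)))

theorem lead_eq_first {σ : Finset P} {G : P} (hG : IsGreatest (σ : Set P) G) :
    s.lead σ = s.first G :=
  congrArg s.first ((Classical.epsilon_spec (p := IsGreatest (σ : Set P)) ⟨G, hG⟩).unique hG)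

theorem lead_eq_of_chamber_mem {σ : Finset P} {w : W} (mem : s.chamber w ∈ σ)
    (le_chamber : ∀ C ∈ σ, C ≤ s.chamber w) : s.lead σ = w := by
  rw [s.lead_eq_first ⟨mem, le_chamber⟩, s.first_chamber]

/-- The chain `σ` of faces of `w` contains a proper face of `w` that lies in no earlier chamber;
such chains are matched by adding or removing `w` itself. -/
structure IsInner (w : W) (σ : Finset P) : Prop where
  le_chamber : ∀ C ∈ σ, C ≤ s.chamber w
  exists_first_eq : ∃ C ∈ σ, C ≠ s.chamber w ∧ s.first C = w

/-- The chain `σ` of faces of `w` consists of `w` itself and of faces lying in earlier chambers;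
such chains are matched using the cone structure on the latter. -/
structure IsOuter (w : W) (σ : Finset P) : Prop where
  le_chamber : ∀ C ∈ σ, C ≤ s.chamber w
  ne_base : w ≠ s.base
  chamber_mem : s.chamber w ∈ σ
  first_ne : ∀ C ∈ σ, C ≠ s.chamber w → s.first C ≠ w

variable {s}

theorem IsInner.lead_eq {w : W} {σ : Finset P} (h : s.IsInner w σ)
    (isChain : IsChain (· ≤ ·) (σ : Set P)) : s.lead σ = w := by
  obtain ⟨C, hC, -, rfl⟩ := h.exists_first_eq
  obtain ⟨G, hG⟩ := exists_isGreatest_of_isChain ⟨C, hC⟩ isChain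
  rw [s.lead_eq_first hG]
  exact s.first_eq_first (hG.2 hC) (h.le_chamber G hG.1)

theorem IsInner.insert [DecidableEq P] {w : W} {σ : Finset P} (h : s.IsInner w σ) :
    s.IsInner w (insert (s.chamber w) σ) where
  le_chamber := by simpa using h.le_chamber
  exists_first_eq := by
    obtain ⟨C, hC, hne, hfirst⟩ := h.exists_first_eq
    exact ⟨C, Finset.mem_insert_of_mem hC, hne, hfirst⟩

theorem IsInner.erase [DecidableEq P] {w : W} {σ : Finset P} (h : s.IsInner w σ) :
    s.IsInner w (σ.erase (s.chamber w)) where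
  le_chamber C hC := h.le_chamber C (Finset.mem_of_mem_erase hC)
  exists_first_eq := by
    obtain ⟨C, hC, hne, hfirst⟩ := h.exists_first_eq
    exact ⟨C, Finset.mem_erase.2 ⟨hne, hC⟩, hne, hfirst⟩

theorem IsInner.ne_base {w : W} {σ : Finset P} (h : s.IsInner w σ) :
    σ ≠ {s.chamber s.base} := by
  rintro rfl
  obtain ⟨C, hC, hne, rfl⟩ := h.exists_first_eq
  rw [Finset.mem_singleton.1 hC, s.first_chamber] at hne
  exact hne rfl

theorem IsOuter.lead_eq {w : W} {σ : Finset P} (h : s.IsOuter w σ) : s.lead σ = w :=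
  s.lead_eq_of_chamber_mem h.chamber_mem h.le_chamber

theorem IsOuter.not_isInner {w : W} {σ : Finset P} (h : s.IsOuter w σ) : ¬ s.IsInner w σ :=
  fun hInner ↦ by
    obtain ⟨C, hC, hne, hfirst⟩ := hInner.exists_first_eq
    exact h.first_ne C hC hne hfirst

theorem isInner_or_isOuter {σ : Finset P} (hσ : IsNonbaseChain (s.chamber s.base) σ) :
    s.IsInner (s.lead σ) σ ∨ s.IsOuter (s.lead σ) σ := by
  obtain ⟨G, hG⟩ := exists_isGreatest_of_isChain hσ.nonempty hσ.isChain
  rw [s.lead_eq_first hG]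
  have le_chamber (C) (hC : C ∈ σ) : C ≤ s.chamber (s.first G) :=
    (hG.2 hC).trans (s.le_chamber_first G)
  by_cases hInner : ∃ C ∈ σ, C ≠ s.chamber (s.first G) ∧ s.first C = s.first G
  · exact .inl ⟨le_chamber, hInner⟩
  push Not at hInner
  refine .inr ⟨le_chamber, fun hbase ↦ hσ.ne_base ?_, ?_, hInner⟩
  · rw [hbase] at le_chamber hInner
    refine Finset.eq_singleton_iff_nonempty_unique_mem.2 ⟨hσ.nonempty, fun C hC ↦ ?_⟩
    by_contra hne
    exact hInner C hC hne (s.first_eq_base (le_chamber C hC))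
  · by_contra hmem
    exact hInner G hG.1 (ne_of_mem_of_not_mem hG.1 hmem) rfl

variable (s)

open Classical in
/-- The elements of the chain `σ` not containing the apex of the cone attached along `w`. -/
noncomputable def detached (w : W) (σ : Finset P) : Finset P := {C ∈ σ | ¬ s.cone w ≤ C}

/-- The join of `cone w` with the elements of `detached w σ`. -/
noncomputable def apex (w : W) (σ : Finset P) : P :=
  Classical.epsilon (h := ⟨s.cone w⟩) (IsLUB (insert (s.cone w) (s.detached w σ : Set P)))

variable {s}

theorem mem_detached {w : W} {σ : Finset P} {C : P} :
    C ∈ s.detached w σ ↔ C ∈ σ ∧ ¬ s.cone w ≤ C := by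
  classical exact Finset.mem_filter

theorem detached_insert [DecidableEq P] {w : W} {A : P} (hA : s.cone w ≤ A) (σ : Finset P) :
    s.detached w (insert A σ) = s.detached w σ := by
  ext C
  simp only [mem_detached, Finset.mem_insert]
  grind

theorem detached_erase [DecidableEq P] {w : W} (A : P) (σ : Finset P) :
    s.detached w (σ.erase A) = (s.detached w σ).erase A := by
  ext C
  simp only [mem_detached, Finset.mem_erase, and_assoc]

theorem detached_erase_of_le [DecidableEq P] {w : W} {A : P} (hA : s.cone w ≤ A) (σ : Finset P) :
    s.detached w (σ.erase A) = s.detached w σ := by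
  rw [detached_erase, Finset.erase_eq_of_notMem]
  exact fun h ↦ (mem_detached.1 h).2 hA

theorem apex_congr {w : W} {σ τ : Finset P} (h : s.detached w σ = s.detached w τ) :
    s.apex w σ = s.apex w τ := by
  rw [apex, h, apex]

namespace IsOuter

variable {w : W} {σ : Finset P} (h : s.IsOuter w σ) (isChain : IsChain (· ≤ ·) (σ : Set P))

include h isChain

theorem isLUB_apex_and_first_apex_ne :
    IsLUB (insert (s.cone w) (s.detached w σ : Set P)) (s.apex w σ) ∧ s.first (s.apex w σ) ≠ w := by
  suffices hJ : ∃ J, IsLUB (insert (s.cone w) (s.detached w σ : Set P)) J ∧ s.first J ≠ w by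
    obtain ⟨J, hJ, hfirst⟩ := hJ
    have isLUB_apex : IsLUB _ (s.apex w σ) :=
      Classical.epsilon_spec (p := IsLUB (insert (s.cone w) (s.detached w σ : Set P))) ⟨J, hJ⟩
    exact ⟨isLUB_apex, isLUB_apex.unique hJ ▸ hfirst⟩
  obtain hempty | hnonempty := (s.detached w σ).eq_empty_or_nonempty
  · refine ⟨s.cone w, ?_, s.first_cone_ne h.ne_base⟩
    simp [hempty]
  obtain ⟨G, hG⟩ := exists_isGreatest_of_isChain hnonempty
    (isChain.mono fun C hC ↦ (mem_detached.1 hC).1)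
  obtain ⟨hGσ, hGcone⟩ := mem_detached.1 hG.1
  have hGne : G ≠ s.chamber w := fun e ↦ hGcone (e ▸ s.cone_le_chamber w)
  obtain ⟨J, hJ, hfirst⟩ := s.exists_join (h.le_chamber G hGσ) (h.first_ne G hGσ hGne)
  refine ⟨J, ?_, hfirst⟩
  rw [IsLUB, upperBounds_insert] at hJ ⊢
  rwa [upperBounds_singleton, ← hG.upperBounds_eq] at hJ

theorem first_apex_ne : s.first (s.apex w σ) ≠ w := (h.isLUB_apex_and_first_apex_ne isChain).2

theorem cone_le_apex : s.cone w ≤ s.apex w σ :=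
  (h.isLUB_apex_and_first_apex_ne isChain).1.1 (Set.mem_insert _ _)

theorem apex_le {D : P} (hcone : s.cone w ≤ D) (hD : ∀ C ∈ s.detached w σ, C ≤ D) :
    s.apex w σ ≤ D :=
  (h.isLUB_apex_and_first_apex_ne isChain).1.2 (Set.forall_insert_of_forall hD hcone)

theorem apex_le_chamber : s.apex w σ ≤ s.chamber w :=
  h.apex_le isChain (s.cone_le_chamber w) fun C hC ↦ h.le_chamber C (mem_detached.1 hC).1

theorem apex_ne_chamber : s.apex w σ ≠ s.chamber w :=
  fun e ↦ h.first_apex_ne isChain (by rw [e, s.first_chamber])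

theorem apex_le_or_le_apex {C : P} (hC : C ∈ σ) : s.apex w σ ≤ C ∨ C ≤ s.apex w σ := by
  by_cases hcone : s.cone w ≤ C
  · refine .inl (h.apex_le isChain hcone fun D hD ↦ ?_)
    obtain ⟨hDσ, hDcone⟩ := mem_detached.1 hD
    exact (isChain.total hDσ hC).resolve_right fun hCD ↦ hDcone (hcone.trans hCD)
  · exact .inr ((h.isLUB_apex_and_first_apex_ne isChain).1.1
      (Set.mem_insert_of_mem _ (mem_detached.2 ⟨hC, hcone⟩)))

theorem of_subset_insert_apex [DecidableEq P] {τ : Finset P} (subset : τ ⊆ insert (s.apex w σ) σ)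
    (chamber_mem : s.chamber w ∈ τ) : s.IsOuter w τ where
  le_chamber C hC := by
    obtain rfl | hC := Finset.mem_insert.1 (subset hC)
    · exact h.apex_le_chamber isChain
    · exact h.le_chamber C hC
  ne_base := h.ne_base
  chamber_mem := chamber_mem
  first_ne C hC hne := by
    obtain rfl | hC := Finset.mem_insert.1 (subset hC)
    · exact h.first_apex_ne isChain
    · exact h.first_ne C hC hne

theorem height_lead_insert_apex_erase_lt [DecidableEq P]
    (hτ : IsChain (· ≤ ·) (insert (s.apex w σ) (σ.erase (s.chamber w)) : Set P)) :
    s.height (s.lead (insert (s.apex w σ) (σ.erase (s.chamber w)))) < s.height w := by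
  obtain ⟨G, hG⟩ := exists_isGreatest_of_isChain
    (Finset.insert_nonempty (s.apex w σ) (σ.erase (s.chamber w))) (by simpa using hτ)
  rw [s.lead_eq_first hG]
  obtain rfl | hGσ := Finset.mem_insert.1 hG.1
  · exact s.height_first_lt (h.apex_le_chamber isChain) (h.first_apex_ne isChain)
  · obtain ⟨hne, hGσ⟩ := Finset.mem_erase.1 hGσ
    exact s.height_first_lt (h.le_chamber G hGσ) (h.first_ne G hGσ hne)

end IsOuter

variable (s)

open Classical in
/-- The element of `P` by which the chain `σ` differs from its partner. -/
noncomputable def toggle (σ : Finset P) : P :=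
  if s.IsInner (s.lead σ) σ then s.chamber (s.lead σ) else s.apex (s.lead σ) σ

open Classical in
/-- The rank function witnessing that the matching given by `toggle` is acyclic. -/
noncomputable def rank (σ : Finset P) : α ×ₗ ℕ ×ₗ ℕ :=
  toLex (s.height (s.lead σ),
    toLex (if s.IsInner (s.lead σ) σ then 1 else 0, (s.detached (s.lead σ) σ).card))

variable {s}

theorem IsInner.toggle_eq {w : W} {σ : Finset P} (h : s.IsInner w σ)
    (isChain : IsChain (· ≤ ·) (σ : Set P)) : s.toggle σ = s.chamber w := by
  rw [toggle, h.lead_eq isChain, if_pos h]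

theorem IsOuter.toggle_eq {w : W} {σ : Finset P} (h : s.IsOuter w σ) :
    s.toggle σ = s.apex w σ := by
  rw [toggle, h.lead_eq, if_neg h.not_isInner]

theorem IsInner.rank_eq {w : W} {σ : Finset P} (h : s.IsInner w σ)
    (isChain : IsChain (· ≤ ·) (σ : Set P)) :
    s.rank σ = toLex (s.height w, toLex (1, (s.detached w σ).card)) := by
  rw [rank, h.lead_eq isChain, if_pos h]

theorem IsOuter.rank_eq {w : W} {σ : Finset P} (h : s.IsOuter w σ) :
    s.rank σ = toLex (s.height w, toLex (0, (s.detached w σ).card)) := by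
  rw [rank, h.lead_eq, if_neg h.not_isInner]

variable [DecidableEq P]

theorem IsInner.rank_lt {w : W} {σ τ : Finset P} {z : P} (h : s.IsInner w σ)
    (isChain : IsChain (· ≤ ·) (σ : Set P)) (hτ : τ = Insert.insert (s.chamber w) (σ.erase z))
    (nonbase : IsNonbaseChain (s.chamber s.base) τ) (unsaturated : s.toggle τ ∉ τ) :
    s.rank τ < s.rank σ := by
  have chamber_mem : s.chamber w ∈ τ := hτ ▸ Finset.mem_insert_self _ _
  have lead_τ : s.lead τ = w := by
    refine s.lead_eq_of_chamber_mem chamber_mem fun C hC ↦ ?_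
    obtain rfl | hC := Finset.mem_insert.1 (hτ ▸ hC)
    · exact le_rfl
    · exact h.le_chamber C (Finset.mem_of_mem_erase hC)
  have hOuter : s.IsOuter w τ := by
    refine lead_τ ▸ (isInner_or_isOuter nonbase).resolve_left fun hInner ↦ unsaturated ?_
    rwa [hInner.toggle_eq nonbase.isChain, lead_τ]
  rw [hOuter.rank_eq, h.rank_eq isChain]
  simp [Prod.Lex.toLex_lt_toLex]

theorem IsOuter.rank_lt {w : W} {σ τ : Finset P} {z : P} (h : s.IsOuter w σ)
    (isChain : IsChain (· ≤ ·) (σ : Set P)) (hz : z ∈ σ) (hτ : τ = insert (s.apex w σ) (σ.erase z))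
    (nonbase : IsNonbaseChain (s.chamber s.base) τ) (unsaturated : s.toggle τ ∉ τ) :
    s.rank τ < s.rank σ := by
  rw [h.rank_eq]
  obtain rfl | hzw := eq_or_ne z (s.chamber w)
  · have hlt := h.height_lead_insert_apex_erase_lt isChain (by simpa [hτ] using nonbase.isChain)
    rw [← hτ] at hlt
    exact Prod.Lex.toLex_lt_toLex.2 (.inl hlt)
  have hOuter : s.IsOuter w τ := by
    refine h.of_subset_insert_apex isChain ?_ ?_ <;> rw [hτ]
    · exact Finset.insert_subset_insert _ (Finset.erase_subset _ _)
    · exact Finset.mem_insert_of_mem (Finset.mem_erase.2 ⟨hzw.symm, h.chamber_mem⟩)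
  have detached_τ : s.detached w τ = s.detached w (σ.erase z) := by
    rw [hτ, detached_insert (h.cone_le_apex isChain)]
  by_cases hcone : s.cone w ≤ z
  · refine (unsaturated ?_).elim
    rw [hOuter.toggle_eq, apex_congr (detached_τ.trans (detached_erase_of_le hcone σ)), hτ]
    exact Finset.mem_insert_self _ _
  · rw [hOuter.rank_eq, detached_τ, detached_erase]
    have z_mem : z ∈ s.detached w σ := mem_detached.2 ⟨hz, hcone⟩
    simpa [Prod.Lex.toLex_lt_toLex] using Finset.card_erase_lt_of_mem z_mem

theorem toggle_insert_toggle {σ : Finset P} (hσ : IsNonbaseChain (s.chamber s.base) σ) :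
    s.toggle (insert (s.toggle σ) σ) = s.toggle σ := by
  obtain h | h := isInner_or_isOuter hσ
  · rw [h.toggle_eq hσ.isChain]
    refine h.insert.toggle_eq ?_
    rw [Finset.coe_insert]
    exact hσ.isChain.insert fun C hC _ ↦ .inr (h.le_chamber C hC)
  · have hinsert := h.of_subset_insert_apex hσ.isChain subset_rfl
      (Finset.mem_insert_of_mem h.chamber_mem)
    rw [h.toggle_eq, hinsert.toggle_eq]
    exact apex_congr (detached_insert (h.cone_le_apex hσ.isChain) σ)

theorem isNonbaseChain_erase_toggle {σ : Finset P} (hσ : IsNonbaseChain (s.chamber s.base) σ) :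
    IsNonbaseChain (s.chamber s.base) (σ.erase (s.toggle σ)) := by
  have isChain : IsChain (· ≤ ·) (σ.erase (s.toggle σ) : Set P) :=
    hσ.isChain.mono (Finset.erase_subset _ _)
  obtain h | h := isInner_or_isOuter hσ
  · rw [h.toggle_eq hσ.isChain] at isChain ⊢
    obtain ⟨C, hC, -⟩ := h.erase.exists_first_eq
    exact ⟨⟨C, hC⟩, isChain, h.erase.ne_base⟩
  · rw [h.toggle_eq] at isChain ⊢
    have chamber_mem := Finset.mem_erase.2 ⟨(h.apex_ne_chamber hσ.isChain).symm, h.chamber_mem⟩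
    refine ⟨⟨_, chamber_mem⟩, isChain, fun hbase ↦ h.ne_base ?_⟩
    rw [hbase, Finset.mem_singleton] at chamber_mem
    rw [← s.first_chamber (s.lead σ), chamber_mem, s.first_chamber]

theorem toggle_erase_toggle {σ : Finset P} (hσ : IsNonbaseChain (s.chamber s.base) σ) :
    s.toggle (σ.erase (s.toggle σ)) = s.toggle σ := by
  obtain h | h := isInner_or_isOuter hσ
  · rw [h.toggle_eq hσ.isChain]
    exact h.erase.toggle_eq (hσ.isChain.mono (Finset.erase_subset _ _))
  · have herase := h.of_subset_insert_apex hσ.isChain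
      ((Finset.erase_subset (s.apex _ σ) σ).trans (Finset.subset_insert _ _))
      (Finset.mem_erase.2 ⟨(h.apex_ne_chamber hσ.isChain).symm, h.chamber_mem⟩)
    rw [h.toggle_eq, herase.toggle_eq]
    exact apex_congr (detached_erase_of_le (h.cone_le_apex hσ.isChain) σ)

variable (s)

/-- The acyclic matching on the order complex induced by a conical shelling. -/
noncomputable def chainMatching : ChainMatching (s.chamber s.base) (α ×ₗ ℕ ×ₗ ℕ) where
  toggle := s.toggle
  rank := s.rank
  comparable {σ} hσ C hC := by
    obtain h | h := isInner_or_isOuter hσ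
    · rw [h.toggle_eq hσ.isChain]
      exact .inr (h.le_chamber C hC)
    · rw [h.toggle_eq]
      exact h.apex_le_or_le_apex hσ.isChain hC
  toggle_insert hσ _ := toggle_insert_toggle hσ
  isNonbaseChain_erase hσ _ := isNonbaseChain_erase_toggle hσ
  toggle_erase hσ _ := toggle_erase_toggle hσ
  rank_lt {σ τ z} hσ _ hz hτ nonbase unsaturated := by
    obtain h | h := isInner_or_isOuter hσ
    · rw [h.toggle_eq hσ.isChain] at hτ
      exact h.rank_lt hσ.isChain hτ nonbase unsaturated
    · rw [h.toggle_eq] at hτ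
      exact h.rank_lt hσ.isChain hz hτ nonbase unsaturated

end ConicalShelling

theorem ConicalShelling.contractibleSpace_nerve {P : Type u} [PartialOrder P] {W α : Type*}
    [PartialOrder α] [WellFoundedLT α] (s : ConicalShelling P W α) :
    ContractibleSpace (SSet.toTop.obj (nerve P)) :=
  open Classical in s.chainMatching.contractibleSpace_nerve

end ConicalShelling

section Coxeter

variable {B W : Type*} [Group W] {M : CoxeterMatrix B} (cs : CoxeterSystem M W)

open CoxeterSystem (alternatingWord)

section Exchange

theorem prod_map_alternatingWord_two_mul {G : Type*} [Monoid G] (f : B → G) (i j : B) (n : ℕ) :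
    ((alternatingWord i j (2 * n)).map f).prod = (f i * f j) ^ n := by
  induction n with
  | zero => simp [alternatingWord]
  | succ n ih =>
    rw [mul_add_one, CoxeterSystem.alternatingWord_succ, CoxeterSystem.alternatingWord_succ]
    simp [pow_succ, ih]

theorem reverse_alternatingWord_two_mul (i j : B) (n : ℕ) :
    (alternatingWord i j (2 * n)).reverse = alternatingWord j i (2 * n) := by
  refine List.ext_getElem (by simp) fun k hk _ ↦ ?_
  simp only [List.length_reverse, CoxeterSystem.length_alternatingWord] at hk
  rw [List.getElem_reverse, CoxeterSystem.getElem_alternatingWord _ _ _ _ (by simp; lia),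
    CoxeterSystem.getElem_alternatingWord _ _ _ _ hk, CoxeterSystem.length_alternatingWord]
  grind

theorem exists_rightInvSeq_alternatingWord_eq_append_self (i j : B) :
    ∃ l, cs.rightInvSeq (alternatingWord i j (2 * M i j)) = l ++ l := by
  suffices h : ∃ l, cs.leftInvSeq (alternatingWord j i (2 * M i j)) = l ++ l by
    obtain ⟨l, hl⟩ := h
    refine ⟨l.reverse, ?_⟩
    rw [← reverse_alternatingWord_two_mul, cs.rightInvSeq_reverse, hl, List.reverse_append]
  set L := cs.leftInvSeq (alternatingWord j i (2 * M i j))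
  have length_L : L.length = 2 * M i j := by simp [L]
  refine ⟨L.take (M i j), ?_⟩
  conv_lhs => rw [← L.take_append_drop (M i j)]
  congr 1
  refine List.ext_getElem (by simp; lia) fun k hk _ ↦ ?_
  have odd_half (n : ℕ) : (2 * n + 1) / 2 = n := by lia
  rw [List.length_drop] at hk
  simp only [List.getElem_drop, List.getElem_take, L]
  rw [cs.getElem_leftInvSeq_alternatingWord _ _ _ _ (by lia),
    cs.getElem_leftInvSeq_alternatingWord _ _ _ _ (by lia), cs.prod_alternatingWord_eq_mul_pow,
    cs.prod_alternatingWord_eq_mul_pow, odd_half, odd_half, pow_add, cs.simple_mul_simple_pow]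
  simp

section ReflectionFlip

variable [DecidableEq W]

/-- The action of the simple reflection `s i` on the pairs of a group element `t` and a sign, where
`t` is conjugated and the sign changes precisely when `t = s i`. Acting by a word counts the
occurrences of `t` among its right inversions modulo two. -/
noncomputable def reflectionFlip (i : B) : Equiv.Perm (W × ZMod 2) :=
  Function.Involutive.toPerm
    (fun p ↦ (cs.simple i * p.1 * cs.simple i, p.2 + if p.1 = cs.simple i then 1 else 0)) <| by
      rintro ⟨t, e⟩
      have conj_eq_iff : cs.simple i * t * cs.simple i = cs.simple i ↔ t = cs.simple i := by
        rw [mul_eq_right, ← cs.inv_simple, inv_mul_eq_one, cs.inv_simple, eq_comm]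
      simp only [conj_eq_iff, add_assoc, CharTwo.add_self_eq_zero, add_zero]
      simp [mul_assoc]

theorem reflectionFlip_apply (i : B) (t : W) (e : ZMod 2) : reflectionFlip cs i (t, e) =
    (cs.simple i * t * cs.simple i, e + if t = cs.simple i then 1 else 0) := rfl

theorem prod_map_reflectionFlip_apply (ω : List B) (t : W) (e : ZMod 2) :
    (ω.map (reflectionFlip cs)).prod (t, e) =
      (cs.wordProd ω * t * (cs.wordProd ω)⁻¹, e + ((cs.rightInvSeq ω).count t : ZMod 2)) := by
  induction ω with
  | nil => simp
  | cons i ω ih =>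
    have conj_eq_iff : cs.wordProd ω * t * (cs.wordProd ω)⁻¹ = cs.simple i ↔
        (cs.wordProd ω)⁻¹ * cs.simple i * cs.wordProd ω = t := by
      rw [mul_inv_eq_iff_eq_mul, mul_assoc, inv_mul_eq_iff_eq_mul, eq_comm]
    rw [List.map_cons, List.prod_cons, Equiv.Perm.mul_apply, ih, reflectionFlip_apply,
      CoxeterSystem.rightInvSeq, List.count_cons, cs.wordProd_cons]
    simp only [conj_eq_iff, beq_iff_eq]
    simp [mul_assoc, add_assoc]

theorem isLiftable_reflectionFlip : M.IsLiftable (reflectionFlip cs) := by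
  intro i j
  ext1 ⟨t, e⟩
  obtain ⟨l, hl⟩ := exists_rightInvSeq_alternatingWord_eq_append_self cs i j
  rw [← prod_map_alternatingWord_two_mul, prod_map_reflectionFlip_apply, hl,
    CoxeterSystem.wordProd, prod_map_alternatingWord_two_mul, cs.simple_mul_simple_pow]
  simp [CharTwo.add_self_eq_zero]

theorem count_rightInvSeq_congr {ω ω' : List B} (h : cs.wordProd ω = cs.wordProd ω') (t : W) :
    ((cs.rightInvSeq ω).count t : ZMod 2) = (cs.rightInvSeq ω').count t := by
  have lift_wordProd (ω : List B) : cs.lift ⟨_, isLiftable_reflectionFlip cs⟩ (cs.wordProd ω) =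
      (ω.map (reflectionFlip cs)).prod := by
    rw [CoxeterSystem.wordProd, map_list_prod, List.map_map]
    congr 2
    exact funext (cs.lift_apply_simple (isLiftable_reflectionFlip cs))
  have hprod : (ω.map (reflectionFlip cs)).prod (t, 0) =
      (ω'.map (reflectionFlip cs)).prod (t, 0) := by
    rw [← lift_wordProd, h, lift_wordProd]
  simpa [prod_map_reflectionFlip_apply] using congrArg Prod.snd hprod

end ReflectionFlip

theorem simple_mem_rightInvSeq_of_isRightDescent {ω : List B} {i : B}
    (h : cs.IsRightDescent (cs.wordProd ω) i) : cs.simple i ∈ cs.rightInvSeq ω := by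
  classical
  obtain ⟨η, hη, hprod⟩ := cs.exists_isReduced (cs.wordProd ω * cs.simple i)
  have wordProd_concat : cs.wordProd (η.concat i) = cs.wordProd ω := by
    rw [cs.wordProd_concat, ← hprod, cs.simple_mul_simple_cancel_right]
  have isReduced_concat : cs.IsReduced (η.concat i) := by
    rw [CoxeterSystem.IsReduced, wordProd_concat, List.length_concat, ← hη.eq, ← hprod]
    exact (cs.isRightDescent_iff.1 h).symm
  have mem_concat : cs.simple i ∈ cs.rightInvSeq (η.concat i) := by
    rw [cs.rightInvSeq_concat, List.concat_eq_append]
    exact List.mem_append_right _ (List.mem_singleton_self _)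
  have count_eq := count_rightInvSeq_congr cs wordProd_concat (cs.simple i)
  rw [List.count_eq_one_of_mem isReduced_concat.nodup_rightInvSeq mem_concat] at count_eq
  by_contra hmem
  simp [List.count_eq_zero_of_not_mem hmem] at count_eq

theorem exchange_of_isRightDescent {ω : List B} {i : B}
    (h : cs.IsRightDescent (cs.wordProd ω) i) :
    ∃ j < ω.length, cs.wordProd ω * cs.simple i = cs.wordProd (ω.eraseIdx j) := by
  obtain ⟨j, hj, hget⟩ := List.getElem_of_mem (simple_mem_rightInvSeq_of_isRightDescent cs h)
  refine ⟨j, by simpa using hj, ?_⟩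
  rw [← cs.wordProd_mul_getD_rightInvSeq, List.getD_eq_getElem _ _ hj, hget]

theorem exchange_append_of_isRightDescent {α β : List B} {i : B}
    (h : cs.IsRightDescent (cs.wordProd α * cs.wordProd β) i) :
    (∃ j < α.length,
      cs.wordProd α * cs.wordProd β * cs.simple i = cs.wordProd (α.eraseIdx j) * cs.wordProd β) ∨
    ∃ j < β.length, cs.wordProd β * cs.simple i = cs.wordProd (β.eraseIdx j) := by
  rw [← cs.wordProd_append] at h
  obtain ⟨j, hj, hprod⟩ := exchange_of_isRightDescent cs h
  rw [cs.wordProd_append] at hprod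
  obtain hjα | hjα := lt_or_ge j α.length
  · rw [List.eraseIdx_append_of_lt_length hjα, cs.wordProd_append] at hprod
    exact .inl ⟨j, hjα, hprod⟩
  · rw [List.eraseIdx_append_of_length_le hjα, cs.wordProd_append, mul_assoc] at hprod
    rw [List.length_append] at hj
    exact .inr ⟨j - α.length, by lia, mul_left_cancel hprod⟩

end Exchange

section Parabolic

variable {T : Set B}

theorem simple_mem_parabolic {i : B} (hi : i ∈ T) : cs.simple i ∈ cs.parabolic T :=
  Subgroup.subset_closure ⟨i, hi, rfl⟩

theorem parabolic_le_iff {H : Subgroup W} : cs.parabolic T ≤ H ↔ ∀ i ∈ T, cs.simple i ∈ H := by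
  rw [CoxeterSystem.parabolic, Subgroup.closure_le, Set.image_subset_iff]
  rfl

theorem wordProd_mem_parabolic {ω : List B} (hω : ∀ i ∈ ω, i ∈ T) :
    cs.wordProd ω ∈ cs.parabolic T :=
  Subgroup.list_prod_mem _ (by simpa using fun i hi ↦ simple_mem_parabolic cs (hω i hi))

theorem parabolic_univ : cs.parabolic Set.univ = ⊤ := by
  rw [CoxeterSystem.parabolic, Set.image_univ, cs.subgroup_closure_range_simple]

/-- `m` is a shortest element of the coset `m W_T`. -/
def IsShortest (T : Set B) (m : W) : Prop := ∀ u ∈ cs.parabolic T, cs.length m ≤ cs.length (m * u)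

variable {cs}

theorem IsShortest.exists_word_mul_simple {m : W} (hm : IsShortest cs T m) {ω : List B}
    (hω : ∀ k ∈ ω, k ∈ T) (hlen : cs.length (m * cs.wordProd ω) = cs.length m + ω.length) {i : B}
    (hi : i ∈ T) : ∃ η : List B, (∀ k ∈ η, k ∈ T) ∧ cs.wordProd η = cs.wordProd ω * cs.simple i ∧
      cs.length (m * cs.wordProd η) = cs.length m + η.length := by
  by_cases hdesc : cs.IsRightDescent (m * cs.wordProd ω) i
  · obtain ⟨α, hα, rfl⟩ := cs.exists_isReduced m
    have hlen_mul := cs.isRightDescent_iff.1 hdesc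
    obtain ⟨j, hj, hprod⟩ | ⟨j, hj, hprod⟩ := exchange_append_of_isRightDescent cs hdesc
    · have hmem := wordProd_mem_parabolic cs hω
      have hle := hm _ (mul_mem (mul_mem hmem (simple_mem_parabolic cs hi)) (inv_mem hmem))
      rw [← mul_assoc, ← mul_assoc, hprod, mul_inv_cancel_right, hα.eq] at hle
      have := cs.length_wordProd_le (α.eraseIdx j)
      rw [List.length_eraseIdx_of_lt hj] at this
      lia
    · refine ⟨ω.eraseIdx j, fun k hk ↦ hω k (List.mem_of_mem_eraseIdx hk), hprod.symm, ?_⟩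
      rw [mul_assoc] at hlen_mul
      rw [← hprod, List.length_eraseIdx_of_lt hj]
      lia
  · refine ⟨ω.concat i, by simpa [or_imp, forall_and] using ⟨hω, hi⟩, cs.wordProd_concat i ω, ?_⟩
    rw [cs.wordProd_concat, ← mul_assoc, cs.not_isRightDescent_iff.1 hdesc, hlen,
      List.length_concat, add_assoc]

theorem IsShortest.exists_word {m : W} (hm : IsShortest cs T m) {u : W}
    (hu : u ∈ cs.parabolic T) : ∃ ω : List B, (∀ i ∈ ω, i ∈ T) ∧ cs.wordProd ω = u ∧
      cs.length (m * u) = cs.length m + ω.length := by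
  induction hu using Subgroup.closure_induction_right with
  | one => exact ⟨[], by simp⟩
  | mul_right x _ y hy ih =>
    obtain ⟨i, hi, rfl⟩ := hy
    obtain ⟨ω, hω, rfl, hlen⟩ := ih
    obtain ⟨η, hη, hprod, hlen'⟩ := hm.exists_word_mul_simple hω hlen hi
    exact ⟨η, hη, hprod, hprod ▸ hlen'⟩
  | mul_inv_cancel x _ y hy ih =>
    obtain ⟨i, hi, rfl⟩ := hy
    obtain ⟨ω, hω, rfl, hlen⟩ := ih
    obtain ⟨η, hη, hprod, hlen'⟩ := hm.exists_word_mul_simple hω hlen hi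
    rw [cs.inv_simple]
    exact ⟨η, hη, hprod, hprod ▸ hlen'⟩

theorem IsShortest.exists_isRightDescent {m : W} (hm : IsShortest cs T m) {u : W}
    (hu : u ∈ cs.parabolic T) (hne : u ≠ 1) : ∃ i ∈ T, cs.IsRightDescent (m * u) i := by
  obtain ⟨ω, hω, rfl, hlen⟩ := hm.exists_word hu
  obtain rfl | ⟨η, i, rfl⟩ := ω.eq_nil_or_concat'
  · exact absurd cs.wordProd_nil hne
  refine ⟨i, hω i (by simp), ?_⟩
  rw [CoxeterSystem.IsRightDescent, hlen, cs.wordProd_append, cs.wordProd_singleton, mul_assoc,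
    cs.simple_mul_simple_cancel_right, List.length_append, List.length_singleton]
  have := cs.length_mul_le m (cs.wordProd η)
  have := cs.length_wordProd_le η
  lia

variable (cs T) in
theorem isShortest_one : IsShortest cs T 1 := by simp [IsShortest]

theorem exists_isReduced_of_mem_parabolic {u : W} (hu : u ∈ cs.parabolic T) :
    ∃ ω : List B, (∀ i ∈ ω, i ∈ T) ∧ cs.wordProd ω = u ∧ cs.IsReduced ω := by
  obtain ⟨ω, hω, rfl, hlen⟩ := (isShortest_one cs T).exists_word hu
  exact ⟨ω, hω, rfl, by simpa [CoxeterSystem.IsReduced] using hlen⟩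

theorem simple_mem_parabolic_of_isRightDescent {u : W} {i : B} (hu : u ∈ cs.parabolic T)
    (hi : cs.IsRightDescent u i) : cs.simple i ∈ cs.parabolic T := by
  obtain ⟨ω, hω, rfl, -⟩ := exists_isReduced_of_mem_parabolic hu
  obtain ⟨j, -, hprod⟩ := exchange_of_isRightDescent cs hi
  rw [eq_inv_mul_of_mul_eq hprod]
  exact mul_mem (inv_mem hu)
    (wordProd_mem_parabolic cs fun k hk ↦ hω k (List.mem_of_mem_eraseIdx hk))

/-- Since `s` is injective, the set on the right-hand side is in fact `T ∩ U`. -/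
theorem parabolic_inf_parabolic (T U : Set B) : cs.parabolic T ⊓ cs.parabolic U =
    cs.parabolic {i | cs.simple i ∈ cs.parabolic T ⊓ cs.parabolic U} := by
  refine le_antisymm (fun u hu ↦ ?_) ((parabolic_le_iff cs).2 fun i hi ↦ hi)
  induction hn : cs.length u using Nat.strong_induction_on generalizing u with
  | _ n ih =>
    subst hn
    obtain rfl | hne := eq_or_ne u 1
    · exact one_mem _
    obtain ⟨i, hdesc⟩ := cs.exists_rightDescent_of_ne_one hne
    have hi : cs.simple i ∈ cs.parabolic T ⊓ cs.parabolic U :=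
      ⟨simple_mem_parabolic_of_isRightDescent hu.1 hdesc,
        simple_mem_parabolic_of_isRightDescent hu.2 hdesc⟩
    rw [← mul_mem_cancel_right (simple_mem_parabolic cs hi)]
    exact ih _ hdesc _ (mul_mem hu hi) rfl

theorem exists_length_mul_of_isRightDescent {w : W} (hw : ∀ i ∈ T, cs.IsRightDescent w i)
    {ω : List B} (hω : ∀ i ∈ ω, i ∈ T) (isReduced : cs.IsReduced ω) :
    ∃ α : List B, w = cs.wordProd α * cs.wordProd ω ∧ α.length + ω.length = cs.length w := by
  induction ω using List.reverseRecOn with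
  | nil =>
    obtain ⟨α, hα, rfl⟩ := cs.exists_isReduced w
    exact ⟨α, by simp, hα.eq.symm⟩
  | append_singleton ω i ih =>
    obtain ⟨α, rfl, hlen⟩ := ih (fun k hk ↦ hω k (List.mem_append_left _ hk))
      (by simpa using isReduced.take ω.length)
    obtain ⟨j, hj, hprod⟩ | ⟨j, hj, hprod⟩ :=
      exchange_append_of_isRightDescent cs (hw i (hω i (by simp)))
    · refine ⟨α.eraseIdx j, ?_, ?_⟩
      · rw [cs.wordProd_append, ← mul_assoc, ← hprod, cs.wordProd_singleton,
          cs.simple_mul_simple_cancel_right]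
      · rw [List.length_eraseIdx_of_lt hj, List.length_append, List.length_singleton]
        lia
    · have hle := cs.length_wordProd_le (ω.eraseIdx j)
      rw [← hprod, ← cs.wordProd_singleton, ← cs.wordProd_append, isReduced.eq,
        List.length_eraseIdx_of_lt hj, List.length_append] at hle
      lia

theorem finite_parabolic_of_isRightDescent {w : W} (hw : ∀ i ∈ T, cs.IsRightDescent w i) :
    Finite (cs.parabolic T) := by
  obtain ⟨η, -, rfl⟩ := cs.exists_isReduced w
  have : Finite (cs.simple '' T) :=
    (cs.rightInvSeq η).finite_toSet.subset <| Set.image_subset_iff.2 fun i hi ↦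
      simple_mem_rightInvSeq_of_isRightDescent cs (hw i hi)
  refine ((List.finite_length_le (cs.simple '' T) (cs.length (cs.wordProd η))).image
    fun l ↦ (l.map (↑)).prod).subset fun u hu ↦ ?_
  obtain ⟨ω, hω, rfl, isReduced⟩ := exists_isReduced_of_mem_parabolic hu
  obtain ⟨α, -, hlen⟩ := exists_length_mul_of_isRightDescent hw hω isReduced
  obtain ⟨l, hl⟩ : ∃ l : List (cs.simple '' T), l.map (↑) = ω.map cs.simple :=
    CanLift.prf _ (by simpa using fun i hi ↦ ⟨i, hω i hi, rfl⟩)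
  have length_l : l.length = ω.length := by simpa using congrArg List.length hl
  exact ⟨l, by rw [Set.mem_ofPred_eq]; lia, congrArg List.prod hl⟩

variable (cs) in
theorem ne_univ_of_finite_parabolic [Infinite W] [Finite (cs.parabolic T)] : T ≠ Set.univ := by
  rintro rfl
  have : Finite (⊤ : Subgroup W) := parabolic_univ cs ▸ ‹_›
  exact not_finite_iff_infinite.2 ‹_› (Finite.of_equiv _ Subgroup.topEquiv.toEquiv)

end Parabolic

end Coxeter

section CoxeterShelling

variable {B W : Type} [Group W] {M : CoxeterMatrix B} (cs : CoxeterSystem M W)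

theorem mem_smul_parabolic_iff {T : Set B} {v w : W} :
    v ∈ w • (cs.parabolic T : Set W) ↔ w⁻¹ * v ∈ cs.parabolic T := by
  rw [Set.mem_smul_set_iff_inv_smul_mem, smul_eq_mul, SetLike.mem_coe]

theorem mul_mem_smul_parabolic {T : Set B} {u : W} (w : W) (hu : u ∈ cs.parabolic T) :
    w * u ∈ w • (cs.parabolic T : Set W) :=
  Set.smul_mem_smul_set hu

theorem self_mem_smul_parabolic (T : Set B) (w : W) : w ∈ w • (cs.parabolic T : Set W) := by
  simpa using mul_mem_smul_parabolic cs w (one_mem (cs.parabolic T))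

theorem parabolic_empty : cs.parabolic (∅ : Set B) = ⊥ := by
  rw [CoxeterSystem.parabolic, Set.image_empty, Subgroup.closure_empty]

variable {cs}

theorem exists_eq_smul_parabolic (C : cs.CosetFace) {w : W} (hw : w ∈ C.1) :
    ∃ T : Set B, T ≠ Set.univ ∧ C.1 = w • (cs.parabolic T : Set W) := by
  obtain ⟨_, v, T, hT, rfl⟩ := C
  exact ⟨T, hT, (leftCoset_eq_iff _).2 ((mem_smul_parabolic_iff cs).1 hw)⟩

theorem nonempty_cosetFace (C : cs.CosetFace) : C.1.Nonempty := by
  obtain ⟨_, w, T, -, rfl⟩ := C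
  exact ⟨w, self_mem_smul_parabolic cs T w⟩

/-- A shortest element of the coset `C`; it is unique by `length_shortest_lt`. -/
noncomputable def shortest (C : cs.CosetFace) : W :=
  Function.argminOn cs.length C.1 (nonempty_cosetFace C)

theorem shortest_mem (C : cs.CosetFace) : shortest C ∈ C.1 :=
  Function.argminOn_mem _ _ _

theorem length_shortest_le {C : cs.CosetFace} {w : W} (hw : w ∈ C.1) :
    cs.length (shortest C) ≤ cs.length w :=
  Function.argminOn_le _ _ hw

theorem exists_isRightDescent_of_shortest_ne {C : cs.CosetFace} {w : W} (hw : w ∈ C.1)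
    (hne : shortest C ≠ w) : ∃ i, w * cs.simple i ∈ C.1 ∧ cs.IsRightDescent w i := by
  obtain ⟨T, -, hC⟩ := exists_eq_smul_parabolic C (shortest_mem C)
  have isShortest : IsShortest cs T (shortest C) := fun u hu ↦
    length_shortest_le (hC ▸ mul_mem_smul_parabolic cs _ hu)
  have hu : (shortest C)⁻¹ * w ∈ cs.parabolic T := (mem_smul_parabolic_iff cs).1 (hC ▸ hw)
  obtain ⟨i, hi, hdesc⟩ := isShortest.exists_isRightDescent hu (inv_mul_eq_one.not.2 hne)
  rw [mul_inv_cancel_left] at hdesc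
  refine ⟨i, ?_, hdesc⟩
  rw [hC, mem_smul_parabolic_iff, ← mul_assoc]
  exact mul_mem hu (simple_mem_parabolic cs hi)

theorem shortest_ne_of_isRightDescent {C : cs.CosetFace} {w : W} {i : B}
    (hmem : w * cs.simple i ∈ C.1) (hi : cs.IsRightDescent w i) : shortest C ≠ w := by
  rintro rfl
  exact (length_shortest_le hmem).not_gt hi

theorem length_shortest_lt {C : cs.CosetFace} {w : W} (hw : w ∈ C.1) (hne : shortest C ≠ w) :
    cs.length (shortest C) < cs.length w := by
  obtain ⟨i, hmem, hi⟩ := exists_isRightDescent_of_shortest_ne hw hne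
  exact (length_shortest_le hmem).trans_lt hi

theorem isLUB_of_coe_eq_inter {C D J : cs.CosetFace} (hJ : J.1 = C.1 ∩ D.1) : IsLUB {C, D} J := by
  refine ⟨?_, fun X hX ↦ ?_⟩
  · rintro X (rfl | rfl)
    exacts [hJ.trans_subset Set.inter_subset_left, hJ.trans_subset Set.inter_subset_right]
  · exact (Set.subset_inter (hX (.inl rfl)) (hX (.inr rfl))).trans_eq hJ.symm

variable (cs)

/-- The chamber `{w}` of the Coxeter complex. -/
def chamberFace [Nonempty B] (w : W) : cs.CosetFace :=
  ⟨{w}, w, ∅, Set.empty_ne_univ, by rw [parabolic_empty]; simp⟩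

theorem le_chamberFace_iff [Nonempty B] {C : cs.CosetFace} {w : W} :
    C ≤ chamberFace cs w ↔ w ∈ C.1 :=
  Set.singleton_subset_iff

/-- The right descent set of `w`. -/
def rightDescentSet (w : W) : Set B := {i | cs.IsRightDescent w i}

instance finite_parabolic_rightDescentSet (w : W) :
    Finite (cs.parabolic (rightDescentSet cs w)) :=
  finite_parabolic_of_isRightDescent fun _ hi ↦ hi

variable [Infinite W]

/-- The face `w W_D` for `D` the right descent set of `w`. -/
def descentFace (w : W) : cs.CosetFace :=
  ⟨w • (cs.parabolic (rightDescentSet cs w) : Set W), w, _, ne_univ_of_finite_parabolic cs, rfl⟩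

variable {cs}

theorem mem_descentFace_self (w : W) : w ∈ (descentFace cs w).1 :=
  self_mem_smul_parabolic cs _ w

theorem mul_simple_mem_descentFace {w : W} {i : B} (hi : cs.IsRightDescent w i) :
    w * cs.simple i ∈ (descentFace cs w).1 :=
  mul_mem_smul_parabolic cs w (simple_mem_parabolic cs hi)

theorem exists_coe_eq_descentFace_inter {C : cs.CosetFace} {w : W} (hw : w ∈ C.1) :
    ∃ J : cs.CosetFace, J.1 = (descentFace cs w).1 ∩ C.1 := by
  obtain ⟨T, -, hC⟩ := exists_eq_smul_parabolic C hw
  have inf_eq := parabolic_inf_parabolic (cs := cs) (rightDescentSet cs w) T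
  set E := {i | cs.simple i ∈ cs.parabolic (rightDescentSet cs w) ⊓ cs.parabolic T}
  have : Finite (cs.parabolic E) :=
    Finite.of_injective _ (Subgroup.inclusion_injective (inf_eq.ge.trans inf_le_left))
  refine ⟨⟨_, w, E, ne_univ_of_finite_parabolic cs, rfl⟩, ?_⟩
  change w • (cs.parabolic E : Set W) = _
  rw [← inf_eq, Subgroup.coe_inf, Set.smul_set_inter, hC, descentFace]

variable (cs)

/-- The shelling of the Coxeter complex of an infinite Coxeter group by the length of chambers. -/
noncomputable def coxeterShelling [Nonempty B] : ConicalShelling cs.CosetFace W ℕ where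
  chamber := chamberFace cs
  first := shortest
  height := cs.length
  base := 1
  cone := descentFace cs
  le_chamber_first C := (le_chamberFace_iff cs).2 (shortest_mem C)
  first_chamber w := shortest_mem (chamberFace cs w)
  height_first_lt h hne := length_shortest_lt ((le_chamberFace_iff cs).1 h) hne
  first_eq_base {C} h := by
    rw [← cs.length_eq_zero_iff, ← Nat.le_zero, ← cs.length_one]
    exact length_shortest_le ((le_chamberFace_iff cs).1 h)
  cone_le_chamber w := (le_chamberFace_iff cs).2 (mem_descentFace_self w)
  first_cone_ne hne := by
    obtain ⟨i, hi⟩ := cs.exists_rightDescent_of_ne_one hne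
    exact shortest_ne_of_isRightDescent (mul_simple_mem_descentFace hi) hi
  exists_join {C w} h hne := by
    have hw := (le_chamberFace_iff cs).1 h
    obtain ⟨i, hmem, hi⟩ := exists_isRightDescent_of_shortest_ne hw hne
    obtain ⟨J, hJ⟩ := exists_coe_eq_descentFace_inter hw
    refine ⟨J, isLUB_of_coe_eq_inter hJ, shortest_ne_of_isRightDescent ?_ hi⟩
    exact hJ ▸ ⟨mul_simple_mem_descentFace hi, hmem⟩

end CoxeterShelling

theorem nonempty_of_infinite_coxeterGroup {B W : Type*} [Group W] [Infinite W] {M : CoxeterMatrix B}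
    (cs : CoxeterSystem M W) : Nonempty B := by
  obtain ⟨w, hw⟩ := exists_ne (1 : W)
  obtain ⟨i, -⟩ := cs.exists_rightDescent_of_ne_one hw
  exact ⟨i⟩

theorem coxeterComplex_contractible_general {B W : Type} [Group W] [Infinite W]
    {M : CoxeterMatrix B} (cs : CoxeterSystem M W) : ContractibleSpace cs.coxeterComplex :=
  have := nonempty_of_infinite_coxeterGroup cs
  (coxeterShelling cs).contractibleSpace_nerve

/-- Serre.  If `W` is an infinite Coxeter group (with finite generating
set `S`), then the Coxeter complex `X_W` is contractible. -/
theorem coxeterComplex_contractible {B W : Type} [Finite B] [Group W] [Infinite W]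
    {M : CoxeterMatrix B} (cs : CoxeterSystem M W) :
    ContractibleSpace cs.coxeterComplex :=
  coxeterComplex_contractible_general cs
end
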